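/- arXiv:0904.2311 — 4 statements merged into one kernel-verified Lean document; each statement's English description precedes it below -/
import Mathlib

section
/- For the side-information vending machine at the encoder (with or without side information available at the encoder), the rate-distortion-cost function satisfies the lower bound R_e(D,C) ≥ min [ I(X;X̂) − I(Y;(X,A)) ], where the minimum is over joint laws of the form P_X(x)·P_{A|X}(a|x)·P_{Y|X,A}(y|x,a)·P_{X̂|X,A,Y}(x̂|x,a,y) satisfying E[ρ(X,X̂)] ≤ D and E[Λ(A)] ≤ C. -/
open scoped BigOperators

noncomputable section

/-- Probability mass of the event `f = a` under the weight function `q` on a finite space. -/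
def pmass {Ω α : Type*} [Fintype Ω] [DecidableEq α] (q : Ω → ℝ) (f : Ω → α) (a : α) : ℝ :=
  ∑ ω, if f ω = a then q ω else 0

/-- Shannon entropy (in bits) of the value of `f` under `q`. -/
def ent {Ω α : Type*} [Fintype Ω] [Fintype α] [DecidableEq α] (q : Ω → ℝ) (f : Ω → α) : ℝ :=
  -∑ a, pmass q f a * Real.logb 2 (pmass q f a)

/-- Conditional Shannon entropy `H(f ∣ g)` (in bits). -/
def condEnt {Ω α β : Type*} [Fintype Ω] [Fintype α] [DecidableEq α] [Fintype β] [DecidableEq β]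
    (q : Ω → ℝ) (f : Ω → α) (g : Ω → β) : ℝ :=
  ent q (fun ω => (f ω, g ω)) - ent q g

/-- Mutual information `I(f ; g)` (in bits). -/
def mutInf {Ω α β : Type*} [Fintype Ω] [Fintype α] [DecidableEq α] [Fintype β] [DecidableEq β]
    (q : Ω → ℝ) (f : Ω → α) (g : Ω → β) : ℝ :=
  ent q f + ent q g - ent q (fun ω => (f ω, g ω))

/-- Conditional mutual information `I(f ; g ∣ h)` (in bits). -/
def condMutInf {Ω α β γ : Type*} [Fintype Ω] [Fintype α] [DecidableEq α] [Fintype β]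
    [DecidableEq β] [Fintype γ] [DecidableEq γ]
    (q : Ω → ℝ) (f : Ω → α) (g : Ω → β) (h : Ω → γ) : ℝ :=
  condEnt q f h - condEnt q f (fun ω => (g ω, h ω))

/-- `q` is a probability mass function on `Ω`. -/
def IsPMF {Ω : Type*} [Fintype Ω] (q : Ω → ℝ) : Prop :=
  (∀ ω, 0 ≤ q ω) ∧ ∑ ω, q ω = 1

variable {𝒳 𝒜 𝒴 Xh : Type}

/-- Joint pmf on `(Xⁿ, Yⁿ)` when the encoder chooses the action sequence `act xⁿ` as a
function of the source, and `Yⁿ` is produced by the memoryless channel `Q = P_{Y|X,A}`. -/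
def encActJoint [Fintype 𝒳] (PX : 𝒳 → ℝ) (Q : 𝒳 → 𝒜 → 𝒴 → ℝ) {n : ℕ}
    (act : (Fin n → 𝒳) → Fin n → 𝒜) : (Fin n → 𝒳) × (Fin n → 𝒴) → ℝ :=
  fun w => (∏ i, PX (w.1 i)) * ∏ i, Q (w.1 i) (act w.1 i) (w.2 i)

/-- Expected total action cost `E[∑ᵢ Λ(Aᵢ)]` when the encoder chooses actions. -/
def encActCost [Fintype 𝒳] (PX : 𝒳 → ℝ) (Λ : 𝒜 → ℝ) {n : ℕ}
    (act : (Fin n → 𝒳) → Fin n → 𝒜) : ℝ :=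
  ∑ xs : Fin n → 𝒳, (∏ i, PX (xs i)) * ∑ i, Λ (act xs i)

/-- Expected total distortion `E[∑ᵢ ρ(Xᵢ, X̂ᵢ)]` for an encoder-actions scheme whose
message is an arbitrary function `msg` of the realized pair `(Xⁿ, Yⁿ)`. -/
def encActDist [Fintype 𝒳] [Fintype 𝒴] (PX : 𝒳 → ℝ) (Q : 𝒳 → 𝒜 → 𝒴 → ℝ)
    (ρ : 𝒳 → Xh → ℝ) {n M : ℕ} (act : (Fin n → 𝒳) → Fin n → 𝒜)
    (msg : (Fin n → 𝒳) → (Fin n → 𝒴) → Fin M)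
    (dec : Fin M → (Fin n → 𝒴) → Fin n → Xh) : ℝ :=
  ∑ w : (Fin n → 𝒳) × (Fin n → 𝒴),
    encActJoint PX Q act w * ∑ i, ρ (w.1 i) (dec (msg w.1 w.2) w.2 i)

/-- `(R, D, C)` is achievable with encoder-chosen actions, the encoder NOT having access
to the side information (the message is a function of `Xⁿ` alone). -/
def AchievableEncNoSI [Fintype 𝒳] [Fintype 𝒴] (PX : 𝒳 → ℝ) (Q : 𝒳 → 𝒜 → 𝒴 → ℝ)
    (ρ : 𝒳 → Xh → ℝ) (Λ : 𝒜 → ℝ) (R D C : ℝ) : Prop :=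
  ∀ ε > (0 : ℝ), ∃ N : ℕ, ∀ n ≥ N,
    ∃ (act : (Fin n → 𝒳) → Fin n → 𝒜)
      (enc : (Fin n → 𝒳) → Fin ⌈(2 : ℝ) ^ ((n : ℝ) * (R + ε))⌉₊)
      (dec : Fin ⌈(2 : ℝ) ^ ((n : ℝ) * (R + ε))⌉₊ → (Fin n → 𝒴) → Fin n → Xh),
      encActDist PX Q ρ act (fun xs _ => enc xs) dec ≤ n * (D + ε) ∧
      encActCost PX Λ act ≤ n * (C + ε)

/-- `(R, D, C)` is achievable with encoder-chosen actions, the encoder having access to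
the side information (the message is a function of `(Xⁿ, Yⁿ)`). -/
def AchievableEncSI [Fintype 𝒳] [Fintype 𝒴] (PX : 𝒳 → ℝ) (Q : 𝒳 → 𝒜 → 𝒴 → ℝ)
    (ρ : 𝒳 → Xh → ℝ) (Λ : 𝒜 → ℝ) (R D C : ℝ) : Prop :=
  ∀ ε > (0 : ℝ), ∃ N : ℕ, ∀ n ≥ N,
    ∃ (act : (Fin n → 𝒳) → Fin n → 𝒜)
      (enc : (Fin n → 𝒳) → (Fin n → 𝒴) → Fin ⌈(2 : ℝ) ^ ((n : ℝ) * (R + ε))⌉₊)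
      (dec : Fin ⌈(2 : ℝ) ^ ((n : ℝ) * (R + ε))⌉₊ → (Fin n → 𝒴) → Fin n → Xh),
      encActDist PX Q ρ act enc dec ≤ n * (D + ε) ∧
      encActCost PX Λ act ≤ n * (C + ε)

/-- The lower-bound set: values `I(X;X̂) − I(Y;(X,A))` over joint laws of the form
`P_X(x)·w(a|x)·Q(y|x,a)·v(x̂|x,a,y)` satisfying the distortion and cost constraints. -/
def lbSetEnc [Fintype 𝒳] [DecidableEq 𝒳] [Fintype 𝒜] [DecidableEq 𝒜]
    [Fintype 𝒴] [DecidableEq 𝒴] [Fintype Xh] [DecidableEq Xh]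
    (PX : 𝒳 → ℝ) (Q : 𝒳 → 𝒜 → 𝒴 → ℝ) (ρ : 𝒳 → Xh → ℝ) (Λ : 𝒜 → ℝ)
    (D C : ℝ) : Set ℝ :=
  {r | ∃ (w : 𝒳 → 𝒜 → ℝ) (v : 𝒳 → 𝒜 → 𝒴 → Xh → ℝ),
    (∀ x a, 0 ≤ w x a) ∧ (∀ x, ∑ a, w x a = 1) ∧
    (∀ x a y xh, 0 ≤ v x a y xh) ∧ (∀ x a y, ∑ xh, v x a y xh = 1) ∧
    (∑ z : 𝒳 × 𝒜 × 𝒴 × Xh,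
        (PX z.1 * w z.1 z.2.1 * Q z.1 z.2.1 z.2.2.1 * v z.1 z.2.1 z.2.2.1 z.2.2.2) *
          ρ z.1 z.2.2.2 ≤ D) ∧
    (∑ z : 𝒳 × 𝒜 × 𝒴 × Xh,
        (PX z.1 * w z.1 z.2.1 * Q z.1 z.2.1 z.2.2.1 * v z.1 z.2.1 z.2.2.1 z.2.2.2) *
          Λ z.2.1 ≤ C) ∧
    r = mutInf (fun z : 𝒳 × 𝒜 × 𝒴 × Xh =>
          PX z.1 * w z.1 z.2.1 * Q z.1 z.2.1 z.2.2.1 * v z.1 z.2.1 z.2.2.1 z.2.2.2)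
          (fun z => z.1) (fun z => z.2.2.2) -
        mutInf (fun z : 𝒳 × 𝒜 × 𝒴 × Xh =>
          PX z.1 * w z.1 z.2.1 * Q z.1 z.2.1 z.2.2.1 * v z.1 z.2.1 z.2.2.1 z.2.2.2)
          (fun z => z.2.2.1) (fun z => (z.1, z.2.1))}

/-! ### Generic finite-sum lemmas -/

lemma pi_marg {ι β : Type*} [Fintype ι] [DecidableEq ι] [Fintype β] (q : ι → β → ℝ)
    (hq : ∀ j, ∑ b, q j b = 1) (i : ι) (f : β → ℝ) :
    ∑ ys : ι → β, (∏ j, q j (ys j)) * f (ys i) = ∑ y, q i y * f y := by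
  classical
  have h1 : ∀ ys : ι → β, (∏ j, q j (ys j)) * f (ys i)
      = ∏ j, (q j (ys j) * if j = i then f (ys j) else 1) := by
    intro ys
    rw [Finset.prod_mul_distrib]
    congr 1
    simp
  rw [Finset.sum_congr rfl (fun ys _ => h1 ys)]
  have h2 := Finset.prod_univ_sum (fun _ : ι => (Finset.univ : Finset β))
    (fun j b => q j b * if j = i then f b else 1)
  rw [Fintype.piFinset_univ] at h2
  rw [← h2, Finset.prod_eq_single i]
  · simp
  · intro j _ hj
    simp [hj, hq]
  · simp

lemma pi_prod {ι β : Type*} [Fintype ι] [DecidableEq ι] [Fintype β] (q : ι → β → ℝ) :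
    ∑ ys : ι → β, (∏ j, q j (ys j)) = ∏ j, ∑ b, q j b := by
  classical
  have h2 := Finset.prod_univ_sum (fun _ : ι => (Finset.univ : Finset β)) q
  rw [Fintype.piFinset_univ] at h2
  exact h2.symm

lemma pmass_sum_mul {Ω α : Type*} [Fintype Ω] [Fintype α] [DecidableEq α] (q : Ω → ℝ)
    (f : Ω → α) (φ : α → ℝ) : ∑ a, pmass q f a * φ a = ∑ ω, q ω * φ (f ω) := by
  unfold pmass
  simp_rw [Finset.sum_mul]
  rw [Finset.sum_comm]
  refine Finset.sum_congr rfl fun ω _ => ?_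
  simp [ite_mul]

lemma ent_eq {Ω α : Type*} [Fintype Ω] [Fintype α] [DecidableEq α] (q : Ω → ℝ) (f : Ω → α) :
    ent q f = -∑ ω, q ω * Real.logb 2 (pmass q f (f ω)) := by
  unfold ent
  rw [pmass_sum_mul q f (fun a => Real.logb 2 (pmass q f a))]

lemma pmass_nonneg {Ω α : Type*} [Fintype Ω] [DecidableEq α] (q : Ω → ℝ) (hq : ∀ ω, 0 ≤ q ω)
    (f : Ω → α) (a : α) : 0 ≤ pmass q f a := by
  unfold pmass
  refine Finset.sum_nonneg fun ω _ => ?_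
  split_ifs
  · exact hq ω
  · exact le_rfl

lemma pmass_pos {Ω α : Type*} [Fintype Ω] [DecidableEq α] (q : Ω → ℝ) (hq : ∀ ω, 0 ≤ q ω)
    (f : Ω → α) (ω : Ω) (h : 0 < q ω) : 0 < pmass q f (f ω) := by
  unfold pmass
  refine Finset.sum_pos' (fun ω' _ => ?_) ⟨ω, Finset.mem_univ _, ?_⟩
  · split_ifs
    · exact hq ω'
    · exact le_rfl
  · simpa using h

lemma pmass_marg {Ω α β : Type*} [Fintype Ω] [Fintype α] [DecidableEq α] [DecidableEq β]
    (q : Ω → ℝ) (f : Ω → α) (g : Ω → β) (b : β) :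
    ∑ a, pmass q (fun ω => (f ω, g ω)) (a, b) = pmass q g b := by
  unfold pmass
  rw [Finset.sum_comm]
  refine Finset.sum_congr rfl fun ω _ => ?_
  by_cases h : g ω = b <;> simp [h]

lemma pmass_total {Ω α : Type*} [Fintype Ω] [Fintype α] [DecidableEq α]
    (q : Ω → ℝ) (f : Ω → α) : ∑ a, pmass q f a = ∑ ω, q ω := by
  simpa using pmass_sum_mul q f (fun _ => 1)

/-- Time-averaged law of `Z w i`, `w ∼ p`, `i` uniform on `Fin n`. -/
def avgLaw {W Ω : Type*} [Fintype W] [DecidableEq Ω] {n : ℕ} (p : W → ℝ) (Z : W → Fin n → Ω)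
    (z : Ω) : ℝ := (1 / (n : ℝ)) * ∑ w, p w * ∑ i, if Z w i = z then (1 : ℝ) else 0

lemma avgLaw_sum {W Ω : Type*} [Fintype W] [Fintype Ω] [DecidableEq Ω] {n : ℕ} (p : W → ℝ)
    (Z : W → Fin n → Ω) (f : Ω → ℝ) :
    ∑ z, avgLaw p Z z * f z = (1 / (n : ℝ)) * ∑ w, p w * ∑ i, f (Z w i) := by
  unfold avgLaw
  simp_rw [mul_assoc, ← Finset.mul_sum, Finset.sum_mul]
  congr 1
  rw [Finset.sum_comm]
  refine Finset.sum_congr rfl fun w _ => ?_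
  simp_rw [mul_assoc, ← Finset.mul_sum, Finset.sum_mul]
  congr 1
  rw [Finset.sum_comm]
  refine Finset.sum_congr rfl fun i _ => ?_
  simp

lemma avgLaw_pmass {W Ω α : Type*} [Fintype W] [Fintype Ω] [DecidableEq Ω] [DecidableEq α]
    {n : ℕ} (p : W → ℝ) (Z : W → Fin n → Ω) (g : Ω → α) (b : α) :
    pmass (avgLaw p Z) g b
      = (1 / (n : ℝ)) * ∑ w, p w * ∑ i, if g (Z w i) = b then (1 : ℝ) else 0 := by
  rw [← avgLaw_sum p Z (fun z => if g z = b then (1 : ℝ) else 0)]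
  unfold pmass
  simp

lemma avgLaw_nonneg {W Ω : Type*} [Fintype W] [DecidableEq Ω] {n : ℕ} (p : W → ℝ)
    (hp : ∀ w, 0 ≤ p w) (Z : W → Fin n → Ω) (z : Ω) : 0 ≤ avgLaw p Z z := by
  unfold avgLaw
  refine mul_nonneg (by positivity) (Finset.sum_nonneg fun w _ => mul_nonneg (hp w) ?_)
  refine Finset.sum_nonneg fun i _ => ?_
  split_ifs <;> norm_num

lemma avgLaw_pos {W Ω : Type*} [Fintype W] [DecidableEq Ω] {n : ℕ} (p : W → ℝ)
    (hp : ∀ w, 0 ≤ p w) (Z : W → Fin n → Ω) (w : W) (i : Fin n) (hw : 0 < p w) :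
    0 < avgLaw p Z (Z w i) := by
  unfold avgLaw
  have hn : 0 < n := i.pos
  have h0 : ∀ w', 0 ≤ ∑ j, if Z w' j = Z w i then (1 : ℝ) else 0 := fun w' =>
    Finset.sum_nonneg fun j _ => by split_ifs <;> norm_num
  refine mul_pos (by positivity) (Finset.sum_pos' (fun w' _ => mul_nonneg (hp w') (h0 w'))
    ⟨w, Finset.mem_univ _, mul_pos hw ?_⟩)
  refine Finset.sum_pos' (fun j _ => by split_ifs <;> norm_num) ⟨i, Finset.mem_univ _, by simp⟩

lemma gibbs {W : Type*} [Fintype W] (p s : W → ℝ) (hp : ∀ w, 0 ≤ p w) (hp1 : ∑ w, p w = 1)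
    (hs : ∀ w, 0 ≤ s w) (hps : ∀ w, 0 < p w → 0 < s w) (M : ℝ) (hM : 0 < M)
    (hsM : ∑ w, s w ≤ M) :
    ∑ w, p w * (Real.logb 2 (s w) - Real.logb 2 (p w)) ≤ Real.logb 2 M := by
  have key : ∀ w, p w * (Real.log (s w) - Real.log (p w) - Real.log M) ≤ s w / M - p w := by
    intro w
    rcases (hp w).eq_or_lt with h | h
    · rw [← h]
      have := hs w
      simp only [zero_mul, sub_zero]
      positivity
    · have h2 := hps w h
      have h3 := Real.log_le_sub_one_of_pos (show 0 < s w / p w / M by positivity)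
      rw [Real.log_div (by positivity) (by positivity), Real.log_div h2.ne' h.ne'] at h3
      calc _ ≤ p w * (s w / p w / M - 1) := by gcongr
        _ = _ := by field_simp
  have h4 := Finset.sum_le_sum (s := Finset.univ) fun w _ => key w
  rw [Finset.sum_sub_distrib, ← Finset.sum_div, hp1] at h4
  have h5 : (∑ w, s w) / M ≤ 1 := by rw [div_le_one hM]; exact hsM
  have h6 : ∑ w, p w * (Real.log (s w) - Real.log (p w) - Real.log M)
      = ∑ w, p w * (Real.log (s w) - Real.log (p w)) - Real.log M := by
    simp_rw [mul_sub (p _) (_ - _) (Real.log M)]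
    rw [Finset.sum_sub_distrib, ← Finset.sum_mul, hp1, one_mul]
  have h7 : ∑ w, p w * (Real.log (s w) - Real.log (p w)) ≤ Real.log M := by linarith
  have h8 : ∑ w, p w * (Real.logb 2 (s w) - Real.logb 2 (p w))
      = (∑ w, p w * (Real.log (s w) - Real.log (p w))) / Real.log 2 := by
    rw [Finset.sum_div]
    refine Finset.sum_congr rfl fun w _ => ?_
    unfold Real.logb
    ring
  rw [h8]
  unfold Real.logb
  have : 0 < Real.log 2 := Real.log_pos (by norm_num)
  gcongr

/-! ### The law of an encoder-actions scheme -/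

section scheme
set_option linter.unusedSectionVars false
variable [Fintype 𝒳] [Fintype 𝒴]

lemma encAct_exp (PX : 𝒳 → ℝ) (Q : 𝒳 → 𝒜 → 𝒴 → ℝ) (hQ1 : ∀ x a, ∑ y, Q x a y = 1) {n : ℕ}
    (act : (Fin n → 𝒳) → Fin n → 𝒜) (i : Fin n) (f : (Fin n → 𝒳) → 𝒴 → ℝ) :
    ∑ w, encActJoint PX Q act w * f w.1 (w.2 i)
      = ∑ xs, (∏ j, PX (xs j)) * ∑ y, Q (xs i) (act xs i) y * f xs y := by
  rw [Fintype.sum_prod_type]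
  refine Finset.sum_congr rfl fun xs _ => ?_
  simp only [encActJoint, mul_assoc]
  rw [← Finset.mul_sum]
  congr 1
  exact pi_marg (fun j y => Q (xs j) (act xs j) y) (fun j => hQ1 _ _) i (f xs)

lemma encAct_expX (PX : 𝒳 → ℝ) (Q : 𝒳 → 𝒜 → 𝒴 → ℝ)
    (hQ1 : ∀ x a, ∑ y, Q x a y = 1) {n : ℕ}
    (act : (Fin n → 𝒳) → Fin n → 𝒜) (f : (Fin n → 𝒳) → ℝ) :
    ∑ w, encActJoint PX Q act w * f w.1 = ∑ xs, (∏ j, PX (xs j)) * f xs := by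
  rw [Fintype.sum_prod_type]
  refine Finset.sum_congr rfl fun xs _ => ?_
  simp only [encActJoint]
  rw [← Finset.sum_mul, ← Finset.mul_sum, pi_prod (fun j y => Q (xs j) (act xs j) y)]
  simp [hQ1]

lemma encAct_nonneg (PX : 𝒳 → ℝ) (hPX : IsPMF PX) (Q : 𝒳 → 𝒜 → 𝒴 → ℝ)
    (hQ0 : ∀ x a y, 0 ≤ Q x a y) {n : ℕ}
    (act : (Fin n → 𝒳) → Fin n → 𝒜) (w) : 0 ≤ encActJoint PX Q act w :=
  mul_nonneg (Finset.prod_nonneg fun _ _ => hPX.1 _) (Finset.prod_nonneg fun _ _ => hQ0 _ _ _)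

lemma encAct_total (PX : 𝒳 → ℝ) (hPX : IsPMF PX) (Q : 𝒳 → 𝒜 → 𝒴 → ℝ)
    (hQ1 : ∀ x a, ∑ y, Q x a y = 1) {n : ℕ}
    (act : (Fin n → 𝒳) → Fin n → 𝒜) : ∑ w, encActJoint PX Q act w = 1 := by
  have := encAct_expX PX Q hQ1 act (fun _ => 1)
  simp only [mul_one] at this
  rw [this, pi_prod (fun _ x => PX x)]
  simp [hPX.2]

end scheme

section converse
set_option linter.unusedSectionVars false
variable [Fintype 𝒳] [DecidableEq 𝒳] [Fintype 𝒜] [DecidableEq 𝒜]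
    [Fintype 𝒴] [DecidableEq 𝒴] [Fintype Xh] [DecidableEq Xh]

/-- The joint law `P_X·w·Q·v`. -/
def jLaw (PX : 𝒳 → ℝ) (Q : 𝒳 → 𝒜 → 𝒴 → ℝ) (w : 𝒳 → 𝒜 → ℝ) (v : 𝒳 → 𝒜 → 𝒴 → Xh → ℝ) :
    𝒳 × 𝒜 × 𝒴 × Xh → ℝ := fun z =>
  PX z.1 * w z.1 z.2.1 * Q z.1 z.2.1 z.2.2.1 * v z.1 z.2.1 z.2.2.1 z.2.2.2

/-- The objective `I(X;X̂) − I(Y;(X,A))`. -/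
def objI (q : 𝒳 × 𝒜 × 𝒴 × Xh → ℝ) : ℝ :=
  mutInf q (fun z => z.1) (fun z => z.2.2.2) - mutInf q (fun z => z.2.2.1) (fun z => (z.1, z.2.1))

/-- The `i`-th letter of a scheme. -/
def letter {n M : ℕ} (act : (Fin n → 𝒳) → Fin n → 𝒜)
    (msg : (Fin n → 𝒳) → (Fin n → 𝒴) → Fin M)
    (dec : Fin M → (Fin n → 𝒴) → Fin n → Xh) (w : (Fin n → 𝒳) × (Fin n → 𝒴)) (i : Fin n) :
    𝒳 × 𝒜 × 𝒴 × Xh := (w.1 i, act w.1 i, w.2 i, dec (msg w.1 w.2) w.2 i)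

lemma marg_X (PX : 𝒳 → ℝ) (hPX : IsPMF PX) (Q : 𝒳 → 𝒜 → 𝒴 → ℝ)
    (hQ1 : ∀ x a, ∑ y, Q x a y = 1) {n M : ℕ} (hn : 0 < n)
    (act : (Fin n → 𝒳) → Fin n → 𝒜) (msg : (Fin n → 𝒳) → (Fin n → 𝒴) → Fin M)
    (dec : Fin M → (Fin n → 𝒴) → Fin n → Xh) (x : 𝒳) :
    pmass (avgLaw (encActJoint PX Q act) (letter act msg dec)) (fun z => z.1) x = PX x := by
  rw [avgLaw_pmass]
  change (1 / (n : ℝ)) * ∑ w, encActJoint PX Q act w *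
    (fun xs : Fin n → 𝒳 => ∑ i, if xs i = x then (1 : ℝ) else 0) w.1 = PX x
  rw [encAct_expX PX Q hQ1 act (fun xs => ∑ i, if xs i = x then (1 : ℝ) else 0)]
  have h1 : ∀ i : Fin n, ∑ xs : Fin n → 𝒳, (∏ j, PX (xs j)) * (if xs i = x then (1 : ℝ) else 0)
      = PX x := by
    intro i
    rw [pi_marg (fun _ => PX) (fun _ => hPX.2) i (fun x' => if x' = x then (1 : ℝ) else 0)]
    simp
  have h2 : ∑ xs : Fin n → 𝒳, (∏ j, PX (xs j)) * (∑ i, if xs i = x then (1 : ℝ) else 0)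
      = n * PX x := by
    simp_rw [Finset.mul_sum]
    rw [Finset.sum_comm, Finset.sum_congr rfl fun i _ => h1 i]
    simp
  have : (n : ℝ) ≠ 0 := by positivity
  rw [h2]
  field_simp

lemma marg_YXA (PX : 𝒳 → ℝ) (Q : 𝒳 → 𝒜 → 𝒴 → ℝ)
    (hQ1 : ∀ x a, ∑ y, Q x a y = 1) {n M : ℕ}
    (act : (Fin n → 𝒳) → Fin n → 𝒜) (msg : (Fin n → 𝒳) → (Fin n → 𝒴) → Fin M)
    (dec : Fin M → (Fin n → 𝒴) → Fin n → Xh) (x : 𝒳) (a : 𝒜) (y : 𝒴) :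
    pmass (avgLaw (encActJoint PX Q act) (letter act msg dec))
        (fun z => (z.2.2.1, (z.1, z.2.1))) (y, (x, a))
      = pmass (avgLaw (encActJoint PX Q act) (letter act msg dec)) (fun z => (z.1, z.2.1)) (x, a)
        * Q x a y := by
  rw [avgLaw_pmass, avgLaw_pmass, mul_assoc]
  congr 1
  change ∑ w, encActJoint PX Q act w *
      ∑ i, (fun (xs : Fin n → 𝒳) y' => if (y', (xs i, act xs i)) = (y, (x, a)) then (1 : ℝ) else 0)
        w.1 (w.2 i)
    = (∑ w, encActJoint PX Q act w *
        (fun xs : Fin n → 𝒳 => ∑ i, if (xs i, act xs i) = (x, a) then (1 : ℝ) else 0) w.1) * Q x a y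
  rw [encAct_expX PX Q hQ1 act (fun xs => ∑ i, if (xs i, act xs i) = (x, a) then (1 : ℝ) else 0)]
  simp_rw [Finset.mul_sum, Finset.sum_mul]
  rw [Finset.sum_comm]
  conv_rhs => rw [Finset.sum_comm]
  refine Finset.sum_congr rfl fun i _ => ?_
  rw [encAct_exp PX Q hQ1 act i
    (fun xs y' => if (y', (xs i, act xs i)) = (y, (x, a)) then (1 : ℝ) else 0)]
  refine Finset.sum_congr rfl fun xs _ => ?_
  rw [mul_assoc]
  congr 1
  by_cases h1 : xs i = x <;> by_cases h2 : act xs i = a <;> simp [h1, h2]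

lemma objI_bound (PX : 𝒳 → ℝ) (hPX : IsPMF PX) (Q : 𝒳 → 𝒜 → 𝒴 → ℝ)
    (hQ0 : ∀ x a y, 0 ≤ Q x a y)
    (hQ1 : ∀ x a, ∑ y, Q x a y = 1) {n M : ℕ} (hn : 0 < n) (hM : 0 < M)
    (act : (Fin n → 𝒳) → Fin n → 𝒜) (msg : (Fin n → 𝒳) → (Fin n → 𝒴) → Fin M)
    (dec : Fin M → (Fin n → 𝒴) → Fin n → Xh) :
    objI (avgLaw (encActJoint PX Q act) (letter act msg dec))
      ≤ (1 / (n : ℝ)) * Real.logb 2 M := by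
  have hmX := marg_X PX hPX Q hQ1 hn act msg dec
  have hmY := marg_YXA PX Q hQ1 act msg dec
  set p := encActJoint PX Q act with hp
  set Z := letter act msg dec with hZ
  set q := avgLaw p Z with hq
  have hp0 : ∀ w, 0 ≤ p w := encAct_nonneg PX hPX Q hQ0 act
  have hp1 : ∑ w, p w = 1 := encAct_total PX hPX Q hQ1 act
  have hq0 : ∀ z, 0 ≤ q z := avgLaw_nonneg p hp0 Z
  have hq1 : ∑ z, q z = 1 := by
    rw [← pmass_total q (fun z => z.1)]
    simp_rw [hmX]
    exact hPX.2
  set pY := pmass q (fun z => z.2.2.1) with hpY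
  set pH := pmass q (fun z => z.2.2.2) with hpH
  set pXH := pmass q (fun z => (z.1, z.2.2.2)) with hpXH
  set c : 𝒳 → Xh → ℝ := fun x h => pXH (x, h) / pH h with hc
  have hpY0 : ∀ y, 0 ≤ pY y := pmass_nonneg q hq0 _
  have hpH0 : ∀ y, 0 ≤ pH y := pmass_nonneg q hq0 _
  have hpXH0 : ∀ y, 0 ≤ pXH y := pmass_nonneg q hq0 _
  have hc0 : ∀ x h, 0 ≤ c x h := fun x h => div_nonneg (hpXH0 _) (hpH0 _)
  have hc1 : ∀ h, ∑ x, c x h ≤ 1 := by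
    intro h
    simp only [hc]
    rw [← Finset.sum_div]
    have : ∑ x, pXH (x, h) = pH h := pmass_marg q (fun z => z.1) (fun z => z.2.2.2) h
    rw [this]
    exact div_self_le_one _
  have hpY1 : ∑ y, pY y = 1 := by rw [hpY, pmass_total, hq1]
  -- the auxiliary weight
  set s : (Fin n → 𝒳) × (Fin n → 𝒴) → ℝ := fun w =>
    (∏ i, pY (w.2 i)) * ∏ i, c (w.1 i) (dec (msg w.1 w.2) w.2 i) with hs
  have hs0 : ∀ w, 0 ≤ s w := fun w =>
    mul_nonneg (Finset.prod_nonneg fun _ _ => hpY0 _) (Finset.prod_nonneg fun _ _ => hc0 _ _)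
  have hqZ : ∀ w, 0 < p w → ∀ i, 0 < q (Z w i) := fun w hw i => avgLaw_pos p hp0 Z w i hw
  have posY : ∀ w, 0 < p w → ∀ i, 0 < pY (w.2 i) := fun w hw i =>
    pmass_pos q hq0 (fun z => z.2.2.1) (Z w i) (hqZ w hw i)
  have posH : ∀ w, 0 < p w → ∀ i, 0 < pH (dec (msg w.1 w.2) w.2 i) := fun w hw i =>
    pmass_pos q hq0 (fun z => z.2.2.2) (Z w i) (hqZ w hw i)
  have posXH : ∀ w, 0 < p w → ∀ i, 0 < pXH (w.1 i, dec (msg w.1 w.2) w.2 i) := fun w hw i =>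
    pmass_pos q hq0 (fun z => (z.1, z.2.2.2)) (Z w i) (hqZ w hw i)
  have hsp : ∀ w, 0 < p w → 0 < s w := fun w hw =>
    mul_pos (Finset.prod_pos fun i _ => posY w hw i)
      (Finset.prod_pos fun i _ => div_pos (posXH w hw i) (posH w hw i))
  have hsM : ∑ w, s w ≤ M := by
    have h1 : ∀ w, s w ≤ ∑ m : Fin M, (∏ i, pY (w.2 i)) * ∏ i, c (w.1 i) (dec m w.2 i) := by
      intro w
      exact Finset.single_le_sum
        (f := fun m : Fin M => (∏ i, pY (w.2 i)) * ∏ i, c (w.1 i) (dec m w.2 i))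
        (fun m _ => mul_nonneg (Finset.prod_nonneg fun _ _ => hpY0 _)
          (Finset.prod_nonneg fun _ _ => hc0 _ _)) (Finset.mem_univ (msg w.1 w.2))
    calc ∑ w, s w ≤ ∑ w : (Fin n → 𝒳) × (Fin n → 𝒴),
          ∑ m : Fin M, (∏ i, pY (w.2 i)) * ∏ i, c (w.1 i) (dec m w.2 i) :=
          Finset.sum_le_sum fun w _ => h1 w
      _ = ∑ m : Fin M, ∑ ys : Fin n → 𝒴,
            (∏ i, pY (ys i)) * ∏ i, ∑ x, c x (dec m ys i) := by
          rw [Finset.sum_comm]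
          refine Finset.sum_congr rfl fun m _ => ?_
          rw [Fintype.sum_prod_type_right]
          refine Finset.sum_congr rfl fun ys _ => ?_
          simp only
          rw [← Finset.mul_sum, pi_prod (fun i x => c x (dec m ys i))]
      _ ≤ ∑ m : Fin M, ∑ ys : Fin n → 𝒴, (∏ i, pY (ys i)) * 1 := by
          refine Finset.sum_le_sum fun m _ => Finset.sum_le_sum fun ys _ => ?_
          refine mul_le_mul_of_nonneg_left ?_ (Finset.prod_nonneg fun _ _ => hpY0 _)
          exact Finset.prod_le_one (fun i _ => Finset.sum_nonneg fun x _ => hc0 _ _)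
            (fun i _ => hc1 _)
      _ = M := by
          simp only [mul_one]
          rw [pi_prod (fun _ y => pY y)]
          simp [hpY1]
  have G := gibbs p s hp0 hp1 hs0 hsp M (by exact_mod_cast hM) hsM
  -- rewrite the objective
  have hobj : objI q = (1 / (n : ℝ)) * ∑ w, p w * (Real.logb 2 (s w) - Real.logb 2 (p w)) := by
    have e1 : objI q = ∑ z, q z * (
        -Real.logb 2 (pmass q (fun z => z.1) z.1) - Real.logb 2 (pH z.2.2.2)
        + Real.logb 2 (pXH (z.1, z.2.2.2)) + Real.logb 2 (pY z.2.2.1)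
        + Real.logb 2 (pmass q (fun z => (z.1, z.2.1)) (z.1, z.2.1))
        - Real.logb 2 (pmass q (fun z => (z.2.2.1, (z.1, z.2.1))) (z.2.2.1, (z.1, z.2.1)))) := by
      unfold objI mutInf
      rw [ent_eq, ent_eq, ent_eq, ent_eq, ent_eq, ent_eq]
      simp only [mul_add, mul_sub, mul_neg, Finset.sum_add_distrib, Finset.sum_sub_distrib,
        Finset.sum_neg_distrib]
      ring
    refine e1.trans ((avgLaw_sum p Z _).trans ?_)
    congr 1
    refine Finset.sum_congr rfl fun w _ => ?_
    rcases (hp0 w).eq_or_lt with h | h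
    · rw [← h]; simp
    congr 1
    have hpw : p w = (∏ i, PX (w.1 i)) * ∏ i, Q (w.1 i) (act w.1 i) (w.2 i) := rfl
    have hne : (∏ i, PX (w.1 i)) * ∏ i, Q (w.1 i) (act w.1 i) (w.2 i) ≠ 0 := by
      rw [← hpw]; exact h.ne'
    have hPne : ∀ i, PX (w.1 i) ≠ 0 := fun i =>
      Finset.prod_ne_zero_iff.1 (left_ne_zero_of_mul hne) i (Finset.mem_univ i)
    have hQne : ∀ i, Q (w.1 i) (act w.1 i) (w.2 i) ≠ 0 := fun i =>
      Finset.prod_ne_zero_iff.1 (right_ne_zero_of_mul hne) i (Finset.mem_univ i)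
    have l1 : Real.logb 2 (p w) = ∑ i, (Real.logb 2 (PX (w.1 i))
        + Real.logb 2 (Q (w.1 i) (act w.1 i) (w.2 i))) := by
      rw [hpw, Real.logb_mul (left_ne_zero_of_mul hne) (right_ne_zero_of_mul hne),
        Real.logb_prod (hf := fun i _ => hPne i), Real.logb_prod (hf := fun i _ => hQne i), Finset.sum_add_distrib]
    have l2 : Real.logb 2 (s w) = ∑ i, (Real.logb 2 (pY (w.2 i))
        + (Real.logb 2 (pXH (w.1 i, dec (msg w.1 w.2) w.2 i))
          - Real.logb 2 (pH (dec (msg w.1 w.2) w.2 i)))) := by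
      have a1 : ∀ i, pY (w.2 i) ≠ 0 := fun i => (posY w h i).ne'
      have a2 : ∀ i, c (w.1 i) (dec (msg w.1 w.2) w.2 i) ≠ 0 := fun i =>
        (div_pos (posXH w h i) (posH w h i)).ne'
      simp only [hs]
      rw [Real.logb_mul (Finset.prod_ne_zero_iff.2 fun i _ => a1 i)
        (Finset.prod_ne_zero_iff.2 fun i _ => a2 i),
        Real.logb_prod (hf := fun i _ => a1 i), Real.logb_prod (hf := fun i _ => a2 i), Finset.sum_add_distrib]
      congr 1
      refine Finset.sum_congr rfl fun i _ => ?_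
      exact Real.logb_div (posXH w h i).ne' (posH w h i).ne'
    rw [l1, l2, ← Finset.sum_sub_distrib]
    refine Finset.sum_congr rfl fun i _ => ?_
    have hXA : 0 < pmass q (fun z => (z.1, z.2.1)) ((Z w i).1, (Z w i).2.1) :=
      pmass_pos q hq0 (fun z => (z.1, z.2.1)) (Z w i) (hqZ w h i)
    rw [hmX, hmY, Real.logb_mul hXA.ne'
      (show Q (Z w i).1 (Z w i).2.1 (Z w i).2.2.1 ≠ 0 from hQne i)]
    simp only [hZ, letter]
    ring
  rw [hobj]
  gcongr

lemma decomp (PX : 𝒳 → ℝ) (hPX : IsPMF PX) (Q : 𝒳 → 𝒜 → 𝒴 → ℝ)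
    (hQ0 : ∀ x a y, 0 ≤ Q x a y)
    (hQ1 : ∀ x a, ∑ y, Q x a y = 1) {n M : ℕ} (hn : 0 < n)
    (act : (Fin n → 𝒳) → Fin n → 𝒜) (msg : (Fin n → 𝒳) → (Fin n → 𝒴) → Fin M)
    (dec : Fin M → (Fin n → 𝒴) → Fin n → Xh) :
    ∃ (w : 𝒳 → 𝒜 → ℝ) (v : 𝒳 → 𝒜 → 𝒴 → Xh → ℝ),
      (∀ x a, 0 ≤ w x a) ∧ (∀ x, ∑ a, w x a = 1) ∧
      (∀ x a y xh, 0 ≤ v x a y xh) ∧ (∀ x a y, ∑ xh, v x a y xh = 1) ∧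
      jLaw PX Q w v = avgLaw (encActJoint PX Q act) (letter act msg dec) := by
  have hmX := marg_X PX hPX Q hQ1 hn act msg dec
  have hmY := marg_YXA PX Q hQ1 act msg dec
  have hq0 : ∀ z, 0 ≤ avgLaw (encActJoint PX Q act) (letter act msg dec) z :=
    avgLaw_nonneg _ (encAct_nonneg PX hPX Q hQ0 act) _
  set q := avgLaw (encActJoint PX Q act) (letter act msg dec) with hq
  obtain ⟨x0, -⟩ : ∃ x, PX x ≠ 0 := by
    by_contra! h
    have := hPX.2
    simp [h] at this
  let a0 : 𝒜 := act (fun _ => x0) ⟨0, hn⟩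
  obtain ⟨y0, -⟩ : ∃ y, Q x0 a0 y ≠ 0 := by
    by_contra! h
    have := hQ1 x0 a0
    simp [h] at this
  let h0 : Xh := dec (msg (fun _ => x0) (fun _ => y0)) (fun _ => y0) ⟨0, hn⟩
  set pXA := pmass q (fun z => (z.1, z.2.1)) with hpXA
  set pY := pmass q (fun z => (z.2.2.1, (z.1, z.2.1))) with hpY
  have hpXA0 : ∀ y, 0 ≤ pXA y := pmass_nonneg q hq0 _
  have hpY0 : ∀ y, 0 ≤ pY y := pmass_nonneg q hq0 _
  have mXA : ∀ x, ∑ a, pXA (x, a) = PX x := by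
    intro x
    rw [← hmX x]
    simp only [hpXA, pmass]
    rw [Finset.sum_comm]
    refine Finset.sum_congr rfl fun z _ => ?_
    by_cases h : z.1 = x <;> simp [h]
  have mY : ∀ x a y, ∑ h, q (x, a, y, h) = pY (y, (x, a)) := by
    intro x a y
    simp only [hpY, pmass]
    simp only [Fintype.sum_prod_type, Prod.mk.injEq]
    rw [Finset.sum_eq_single x, Finset.sum_eq_single a, Finset.sum_eq_single y]
    all_goals simp +contextual
  refine ⟨fun x a => if PX x = 0 then (if a = a0 then 1 else 0) else pXA (x, a) / PX x,
    fun x a y h => if pY (y, (x, a)) = 0 then (if h = h0 then 1 else 0)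
      else q (x, a, y, h) / pY (y, (x, a)), ?_, ?_, ?_, ?_, ?_⟩
  · intro x a
    dsimp only
    split_ifs
    · norm_num
    · norm_num
    · exact div_nonneg (hpXA0 _) (hPX.1 _)
  · intro x
    by_cases h : PX x = 0
    · simp [h]
    · simp only [h, if_false]
      rw [← Finset.sum_div, mXA, div_self h]
  · intro x a y h
    dsimp only
    split_ifs
    · norm_num
    · norm_num
    · exact div_nonneg (hq0 _) (hpY0 _)
  · intro x a y
    by_cases h : pY (y, (x, a)) = 0
    · simp [h]
    · simp only [h, if_false]
      rw [← Finset.sum_div, mY, div_self h]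
  · funext z
    obtain ⟨x, a, y, h⟩ := z
    simp only [jLaw]
    have e1 : PX x * (if PX x = 0 then (if a = a0 then 1 else 0) else pXA (x, a) / PX x)
        = pXA (x, a) := by
      by_cases hx : PX x = 0
      · have h2 := mXA x
        rw [hx, Finset.sum_eq_zero_iff_of_nonneg (fun a _ => hpXA0 _)] at h2
        rw [hx, h2 a (Finset.mem_univ a)]
        simp
      · simp only [hx, if_false]
        field_simp
    rw [e1, ← hmY]
    by_cases hy : pY (y, (x, a)) = 0
    · have h2 := mY x a y
      rw [hy, Finset.sum_eq_zero_iff_of_nonneg (fun a _ => hq0 _)] at h2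
      rw [hy, h2 h (Finset.mem_univ h)]
      simp
    · simp only [hy, if_false]
      field_simp

end converse

section final
set_option linter.unusedSectionVars false
variable [Fintype 𝒳] [DecidableEq 𝒳] [Fintype 𝒜] [DecidableEq 𝒜]
    [Fintype 𝒴] [DecidableEq 𝒴] [Fintype Xh] [DecidableEq Xh]

/-- Pairs of stochastic kernels. -/
def stochK (𝒳 𝒜 𝒴 Xh : Type) [Fintype 𝒜] [Fintype Xh] :
    Set ((𝒳 → 𝒜 → ℝ) × (𝒳 → 𝒜 → 𝒴 → Xh → ℝ)) :=
  {u | (∀ x a, 0 ≤ u.1 x a) ∧ (∀ x, ∑ a, u.1 x a = 1) ∧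
    (∀ x a y xh, 0 ≤ u.2 x a y xh) ∧ (∀ x a y, ∑ xh, u.2 x a y xh = 1)}

lemma stochK_compact : IsCompact (stochK 𝒳 𝒜 𝒴 Xh) := by
  have hcl : IsClosed (stochK 𝒳 𝒜 𝒴 Xh) := by
    unfold stochK
    simp only [Set.ofPred_and, Set.ofPred_forall]
    refine IsClosed.inter ?_ (IsClosed.inter ?_ (IsClosed.inter ?_ ?_))
    · exact isClosed_iInter fun x => isClosed_iInter fun a =>
        isClosed_le continuous_const (by fun_prop)
    · exact isClosed_iInter fun x => isClosed_eq (by fun_prop) continuous_const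
    · exact isClosed_iInter fun x => isClosed_iInter fun a => isClosed_iInter fun y =>
        isClosed_iInter fun h => isClosed_le continuous_const (by fun_prop)
    · exact isClosed_iInter fun x => isClosed_iInter fun a => isClosed_iInter fun y =>
        isClosed_eq (by fun_prop) continuous_const
  refine IsCompact.of_isClosed_subset (isCompact_Icc (a := (0 : (𝒳 → 𝒜 → ℝ) × (𝒳 → 𝒜 → 𝒴 → Xh → ℝ)))
    (b := (1 : (𝒳 → 𝒜 → ℝ) × (𝒳 → 𝒜 → 𝒴 → Xh → ℝ)))) hcl ?_
  rintro u ⟨h1, h2, h3, h4⟩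
  refine ⟨⟨fun x a => h1 x a, fun x a y h => h3 x a y h⟩, ⟨fun x a => ?_, fun x a y h => ?_⟩⟩
  · change u.1 x a ≤ 1
    rw [← h2 x]
    exact Finset.single_le_sum (f := fun a => u.1 x a) (fun a _ => h1 x a) (Finset.mem_univ a)
  · change u.2 x a y h ≤ 1
    rw [← h4 x a y]
    exact Finset.single_le_sum (f := fun h => u.2 x a y h) (fun h _ => h3 x a y h)
      (Finset.mem_univ h)

lemma jLaw_cont (PX : 𝒳 → ℝ) (Q : 𝒳 → 𝒜 → 𝒴 → ℝ) (z : 𝒳 × 𝒜 × 𝒴 × Xh) :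
    Continuous fun u : (𝒳 → 𝒜 → ℝ) × (𝒳 → 𝒜 → 𝒴 → Xh → ℝ) => jLaw PX Q u.1 u.2 z := by
  unfold jLaw
  fun_prop

lemma ent_cont {α : Type*} [Fintype α] [DecidableEq α] (PX : 𝒳 → ℝ) (Q : 𝒳 → 𝒜 → 𝒴 → ℝ)
    (f : 𝒳 × 𝒜 × 𝒴 × Xh → α) :
    Continuous fun u : (𝒳 → 𝒜 → ℝ) × (𝒳 → 𝒜 → 𝒴 → Xh → ℝ) => ent (jLaw PX Q u.1 u.2) f := by
  unfold ent
  refine (continuous_finsetSum _ fun a _ => ?_).neg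
  have h1 : Continuous fun t : ℝ => t * Real.logb 2 t := by
    unfold Real.logb
    simp_rw [← mul_div_assoc]
    exact Real.continuous_mul_log.div_const _
  refine h1.comp ?_
  unfold pmass
  refine continuous_finsetSum _ fun z _ => ?_
  split_ifs
  · exact jLaw_cont PX Q z
  · exact continuous_const

lemma objI_cont (PX : 𝒳 → ℝ) (Q : 𝒳 → 𝒜 → 𝒴 → ℝ) :
    Continuous fun u : (𝒳 → 𝒜 → ℝ) × (𝒳 → 𝒜 → 𝒴 → Xh → ℝ) => objI (jLaw PX Q u.1 u.2) := by
  unfold objI mutInf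
  have := fun {α : Type} [Fintype α] [DecidableEq α] (f : 𝒳 × 𝒜 × 𝒴 × Xh → α) => ent_cont PX Q f
  exact (((this _).add (this _)).sub (this _)).sub (((this _).add (this _)).sub (this _))

lemma lb_bddBelow (PX : 𝒳 → ℝ) (Q : 𝒳 → 𝒜 → 𝒴 → ℝ) (ρ : 𝒳 → Xh → ℝ) (Λ : 𝒜 → ℝ) (D C : ℝ) :
    BddBelow (lbSetEnc PX Q ρ Λ D C) := by
  refine ((stochK_compact (𝒳 := 𝒳) (𝒜 := 𝒜) (𝒴 := 𝒴) (Xh := Xh)).bddBelow_image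
    (objI_cont PX Q).continuousOn).mono ?_
  rintro r ⟨w, v, h1, h2, h3, h4, -, -, rfl⟩
  exact ⟨(w, v), ⟨h1, h2, h3, h4⟩, rfl⟩

lemma single_letter (PX : 𝒳 → ℝ) (hPX : IsPMF PX) (Q : 𝒳 → 𝒜 → 𝒴 → ℝ)
    (hQ0 : ∀ x a y, 0 ≤ Q x a y) (hQ1 : ∀ x a, ∑ y, Q x a y = 1)
    (ρ : 𝒳 → Xh → ℝ) (Λ : 𝒜 → ℝ) {n M : ℕ} (hn : 0 < n) (hM : 0 < M)
    (act : (Fin n → 𝒳) → Fin n → 𝒜) (msg : (Fin n → 𝒳) → (Fin n → 𝒴) → Fin M)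
    (dec : Fin M → (Fin n → 𝒴) → Fin n → Xh) :
    ∃ u ∈ stochK 𝒳 𝒜 𝒴 Xh,
      ∑ z, jLaw PX Q u.1 u.2 z * ρ z.1 z.2.2.2 = (1 / (n : ℝ)) * encActDist PX Q ρ act msg dec ∧
      ∑ z, jLaw PX Q u.1 u.2 z * Λ z.2.1 = (1 / (n : ℝ)) * encActCost PX Λ act ∧
      objI (jLaw PX Q u.1 u.2) ≤ (1 / (n : ℝ)) * Real.logb 2 M := by
  obtain ⟨w, v, h1, h2, h3, h4, h5⟩ := decomp PX hPX Q hQ0 hQ1 hn act msg dec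
  refine ⟨(w, v), ⟨h1, h2, h3, h4⟩, ?_⟩
  simp only [h5]
  refine ⟨?_, ?_, objI_bound PX hPX Q hQ0 hQ1 hn hM act msg dec⟩
  · rw [avgLaw_sum _ _ (fun z : 𝒳 × 𝒜 × 𝒴 × Xh => ρ z.1 z.2.2.2)]
    rfl
  · rw [avgLaw_sum _ _ (fun z : 𝒳 × 𝒜 × 𝒴 × Xh => Λ z.2.1)]
    congr 1
    exact encAct_expX PX Q hQ1 act (fun xs => ∑ i, Λ (act xs i))

lemma rate_bound (r : ℝ) (n : ℕ) (hn : 0 < n) :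
    (1 / (n : ℝ)) * Real.logb 2 (⌈(2 : ℝ) ^ ((n : ℝ) * r)⌉₊ : ℕ) ≤ max r 0 + 1 / n := by
  have hn' : (0 : ℝ) < n := by exact_mod_cast hn
  have h0 : (0 : ℝ) < 2 ^ ((n : ℝ) * r) := by positivity
  have hc : 0 < ⌈(2 : ℝ) ^ ((n : ℝ) * r)⌉₊ := Nat.ceil_pos.2 h0
  have h1 : ((⌈(2 : ℝ) ^ ((n : ℝ) * r)⌉₊ : ℕ) : ℝ) ≤ 2 ^ ((n : ℝ) * max r 0 + 1) := by
    have a1 := (Nat.ceil_lt_add_one h0.le).le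
    have a2 : (2 : ℝ) ^ ((n : ℝ) * r) ≤ 2 ^ ((n : ℝ) * max r 0) :=
      Real.rpow_le_rpow_of_exponent_le (by norm_num)
        (mul_le_mul_of_nonneg_left (le_max_left _ _) hn'.le)
    have a3 : (1 : ℝ) ≤ 2 ^ ((n : ℝ) * max r 0) :=
      Real.one_le_rpow (by norm_num) (mul_nonneg hn'.le (le_max_right _ _))
    rw [Real.rpow_add (by norm_num), Real.rpow_one]
    linarith
  have h2 : Real.logb 2 (⌈(2 : ℝ) ^ ((n : ℝ) * r)⌉₊ : ℕ) ≤ (n : ℝ) * max r 0 + 1 := by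
    rw [Real.logb_le_iff_le_rpow (by norm_num) (by exact_mod_cast hc)]
    exact h1
  calc _ ≤ (1 / (n : ℝ)) * ((n : ℝ) * max r 0 + 1) := by gcongr
    _ = _ := by field_simp

lemma claimK (PX : 𝒳 → ℝ) (hPX : IsPMF PX) (Q : 𝒳 → 𝒜 → 𝒴 → ℝ)
    (hQ0 : ∀ x a y, 0 ≤ Q x a y) (hQ1 : ∀ x a, ∑ y, Q x a y = 1)
    (ρ : 𝒳 → Xh → ℝ) (Λ : 𝒜 → ℝ) (D C R : ℝ) (hR : AchievableEncSI PX Q ρ Λ R D C) :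
    sInf (lbSetEnc PX Q ρ Λ D C) ≤ max R 0 := by
  let S : ℝ → Set ((𝒳 → 𝒜 → ℝ) × (𝒳 → 𝒜 → 𝒴 → Xh → ℝ)) := fun ε =>
    stochK 𝒳 𝒜 𝒴 Xh ∩ ({u | ∑ z, jLaw PX Q u.1 u.2 z * ρ z.1 z.2.2.2 ≤ D + ε} ∩
      ({u | ∑ z, jLaw PX Q u.1 u.2 z * Λ z.2.1 ≤ C + ε} ∩
        {u | objI (jLaw PX Q u.1 u.2) ≤ max R 0 + 2 * ε}))
  have hne : ∀ ε > 0, (S ε).Nonempty := by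
    intro ε hε
    obtain ⟨N, hN⟩ := hR ε hε
    obtain ⟨k, hk⟩ := exists_nat_gt (1 / ε)
    set n := max N k with hn
    have hk0 : (0 : ℝ) < k := lt_trans (by positivity) hk
    have hkn : (k : ℝ) ≤ n := by exact_mod_cast le_max_right N k
    have hn0 : (0 : ℝ) < n := hk0.trans_le hkn
    have hn0' : 0 < n := by exact_mod_cast hn0
    obtain ⟨act, enc, dec, hd, hc⟩ := hN n (le_max_left _ _)
    obtain ⟨u, hu, e1, e2, e3⟩ := single_letter PX hPX Q hQ0 hQ1 ρ Λ hn0'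
      (Nat.ceil_pos.2 (by positivity)) act enc dec
    refine ⟨u, hu, ?_, ?_, ?_⟩
    · rw [Set.mem_setOf_eq]
      rw [e1, one_div, inv_mul_le_iff₀ hn0]
      exact hd
    · rw [Set.mem_setOf_eq]
      rw [e2, one_div, inv_mul_le_iff₀ hn0]
      exact hc
    · rw [Set.mem_setOf_eq]
      have b1 := rate_bound (R + ε) n hn0'
      have b2 : 1 / (n : ℝ) ≤ ε := by
        rw [one_div_le hn0 hε]
        exact hk.le.trans hkn
      have b3 : max (R + ε) 0 ≤ max R 0 + ε := by
        refine max_le ?_ ?_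
        · linarith [le_max_left R 0]
        · linarith [le_max_right R 0]
      linarith
  have hclosed : ∀ ε, IsClosed ({u | ∑ z, jLaw PX Q u.1 u.2 z * ρ z.1 z.2.2.2 ≤ D + ε} ∩
      ({u | ∑ z, jLaw PX Q u.1 u.2 z * Λ z.2.1 ≤ C + ε} ∩
        {u : (𝒳 → 𝒜 → ℝ) × (𝒳 → 𝒜 → 𝒴 → Xh → ℝ) |
          objI (jLaw PX Q u.1 u.2) ≤ max R 0 + 2 * ε})) := by
    intro ε
    refine IsClosed.inter ?_ (IsClosed.inter ?_ ?_)
    · exact isClosed_le (continuous_finsetSum _ fun z _ => (jLaw_cont PX Q z).mul continuous_const)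
        continuous_const
    · exact isClosed_le (continuous_finsetSum _ fun z _ => (jLaw_cont PX Q z).mul continuous_const)
        continuous_const
    · exact isClosed_le (objI_cont PX Q) continuous_const
  have hcomp : ∀ ε, IsCompact (S ε) := fun ε => stochK_compact.inter_right (hclosed ε)
  have hmono : ∀ ε δ, ε ≤ δ → S ε ⊆ S δ := by
    rintro ε δ h u ⟨h1, h2, h3, h4⟩
    rw [Set.mem_setOf_eq] at h2 h3 h4
    refine ⟨h1, ?_, ?_, ?_⟩ <;> rw [Set.mem_setOf_eq]
    · exact le_trans h2 (by linarith)
    · exact le_trans h3 (by linarith)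
    · exact le_trans h4 (by linarith)
  obtain ⟨u, hu⟩ := IsCompact.nonempty_iInter_of_sequence_nonempty_isCompact_isClosed
    (fun k : ℕ => S (1 / ((k : ℝ) + 1)))
    (fun k => hmono _ _ (by push_cast; gcongr; linarith))
    (fun k => hne _ (by positivity)) (hcomp _) (fun k => (hcomp _).isClosed)
  rw [Set.mem_iInter] at hu
  have hlim : ∀ a b c : ℝ, (∀ k : ℕ, a ≤ b + c * (1 / ((k : ℝ) + 1))) → a ≤ b := by
    intro a b c h
    have t : Filter.Tendsto (fun k : ℕ => b + c * (1 / ((k : ℝ) + 1))) Filter.atTop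
        (nhds (b + c * 0)) :=
      (tendsto_one_div_add_atTop_nhds_zero_nat.const_mul c).const_add b
    have := ge_of_tendsto' t h
    linarith
  have m : objI (jLaw PX Q u.1 u.2) ∈ lbSetEnc PX Q ρ Λ D C := by
    obtain ⟨h1, h2, h3, h4⟩ := (hu 0).1
    refine ⟨u.1, u.2, h1, h2, h3, h4, ?_, ?_, rfl⟩
    · exact hlim _ D 1 fun k => by simpa [jLaw] using (hu k).2.1
    · exact hlim _ C 1 fun k => by simpa [jLaw] using (hu k).2.2.1
  exact (csInf_le (lb_bddBelow PX Q ρ Λ D C) m).trans (hlim _ _ 2 fun k => (hu k).2.2.2)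

lemma jLaw_sumX (PX : 𝒳 → ℝ) (Q : 𝒳 → 𝒜 → 𝒴 → ℝ) (hQ1 : ∀ x a, ∑ y, Q x a y = 1)
    (w : 𝒳 → 𝒜 → ℝ) (v : 𝒳 → 𝒜 → 𝒴 → Xh → ℝ) (hw : ∀ x, ∑ a, w x a = 1)
    (hv : ∀ x a y, ∑ xh, v x a y xh = 1) (f : 𝒳 → ℝ) :
    ∑ z, jLaw PX Q w v z * f z.1 = ∑ x, PX x * f x := by
  simp only [Fintype.sum_prod_type, jLaw]
  refine Finset.sum_congr rfl fun x _ => ?_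
  simp_rw [← Finset.sum_mul, ← Finset.mul_sum, hv, mul_one, ← Finset.mul_sum, hQ1, mul_one,
    ← Finset.mul_sum, hw, mul_one]

lemma ach_nonempty (PX : 𝒳 → ℝ) (hPX : IsPMF PX) (Q : 𝒳 → 𝒜 → 𝒴 → ℝ)
    (hQ0 : ∀ x a y, 0 ≤ Q x a y) (hQ1 : ∀ x a, ∑ y, Q x a y = 1)
    (ρ : 𝒳 → Xh → ℝ) (Λ : 𝒜 → ℝ) (D C : ℝ) (hne : (lbSetEnc PX Q ρ Λ D C).Nonempty) :
    ∃ R, AchievableEncNoSI PX Q ρ Λ R D C := by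
  obtain ⟨r, w, v, hw0, hw, hv0, hv, hd, hc, -⟩ := hne
  change ∑ z, jLaw PX Q w v z * ρ z.1 z.2.2.2 ≤ D at hd
  change ∑ z, jLaw PX Q w v z * Λ z.2.1 ≤ C at hc
  have hj0 : ∀ z, 0 ≤ jLaw PX Q w v z := fun z =>
    mul_nonneg (mul_nonneg (mul_nonneg (hPX.1 _) (hw0 _ _)) (hQ0 _ _ _)) (hv0 _ _ _ _)
  have neX : Nonempty 𝒳 := by
    by_contra h
    rw [not_nonempty_iff] at h
    simpa using hPX.2
  obtain ⟨x0⟩ := id neX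
  have neA : Nonempty 𝒜 := by
    by_contra h
    rw [not_nonempty_iff] at h
    simpa using hw x0
  obtain ⟨a0⟩ := id neA
  have neY : Nonempty 𝒴 := by
    by_contra h
    rw [not_nonempty_iff] at h
    simpa using hQ1 x0 a0
  obtain ⟨y0⟩ := id neY
  have neH : Nonempty Xh := by
    by_contra h
    rw [not_nonempty_iff] at h
    simpa using hv x0 a0 y0
  obtain ⟨am, ham⟩ := Finite.exists_min Λ
  choose xm hxm using fun x => Finite.exists_min (ρ x)
  have hd' : ∑ x, PX x * ρ x (xm x) ≤ D := by
    rw [← jLaw_sumX PX Q hQ1 w v hw hv (fun x => ρ x (xm x))]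
    refine le_trans (Finset.sum_le_sum fun z _ => ?_) hd
    exact mul_le_mul_of_nonneg_left (hxm _ _) (hj0 z)
  have hc' : Λ am ≤ C := by
    have e : ∑ x, PX x * Λ am = Λ am := by rw [← Finset.sum_mul, hPX.2, one_mul]
    rw [← e, ← jLaw_sumX PX Q hQ1 w v hw hv (fun _ => Λ am)]
    refine le_trans (Finset.sum_le_sum fun z _ => ?_) hc
    exact mul_le_mul_of_nonneg_left (ham _) (hj0 z)
  refine ⟨Real.logb 2 (Fintype.card 𝒳), fun ε hε => ⟨0, fun n _ => ?_⟩⟩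
  have hcard : Fintype.card (Fin n → 𝒳) ≤ Fintype.card
      (Fin ⌈(2 : ℝ) ^ ((n : ℝ) * (Real.logb 2 (Fintype.card 𝒳) + ε))⌉₊) := by
    rw [Fintype.card_fin, Fintype.card_fun, Fintype.card_fin]
    have h0 : (0 : ℝ) < Fintype.card 𝒳 := by exact_mod_cast Fintype.card_pos
    have h1 : ((Fintype.card 𝒳 ^ n : ℕ) : ℝ)
        ≤ (2 : ℝ) ^ ((n : ℝ) * (Real.logb 2 (Fintype.card 𝒳) + ε)) := by
      push_cast
      calc ((Fintype.card 𝒳 : ℝ)) ^ n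
          = (2 : ℝ) ^ ((n : ℝ) * Real.logb 2 (Fintype.card 𝒳)) := by
            rw [mul_comm, Real.rpow_mul (by norm_num), Real.rpow_logb (by norm_num) (by norm_num) h0,
              Real.rpow_natCast]
        _ ≤ _ := by
            refine Real.rpow_le_rpow_of_exponent_le (by norm_num) ?_
            gcongr
            linarith
    exact_mod_cast h1.trans (Nat.le_ceil _)
  obtain ⟨e⟩ := Function.Embedding.nonempty_of_card_le hcard
  have hn0 : (0 : ℝ) ≤ n := Nat.cast_nonneg n
  refine ⟨fun _ _ => am, e, fun m _ i => xm (Function.invFun e m i), ?_, ?_⟩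
  · unfold encActDist
    simp only [Function.leftInverse_invFun e.injective _]
    rw [encAct_expX PX Q hQ1 _ (fun xs => ∑ i, ρ (xs i) (xm (xs i)))]
    simp_rw [Finset.mul_sum]
    rw [Finset.sum_comm]
    simp_rw [pi_marg (fun _ => PX) (fun _ => hPX.2) _ (fun x => ρ x (xm x))]
    rw [Finset.sum_const, Finset.card_univ, Fintype.card_fin, nsmul_eq_mul]
    gcongr
    linarith
  · unfold encActCost
    rw [← Finset.sum_mul, pi_prod (fun _ x => PX x)]
    simp only [hPX.2, Finset.prod_const_one, one_mul, Finset.sum_const, Finset.card_univ,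
      Fintype.card_fin, nsmul_eq_mul]
    gcongr
    linarith

lemma ceil_one (n : ℕ) (r : ℝ) (hr : r ≤ 0) : ⌈(2 : ℝ) ^ ((n : ℝ) * r)⌉₊ = 1 := by
  have h1 : 0 < ⌈(2 : ℝ) ^ ((n : ℝ) * r)⌉₊ := Nat.ceil_pos.2 (by positivity)
  have h2 : ⌈(2 : ℝ) ^ ((n : ℝ) * r)⌉₊ ≤ 1 := by
    rw [Nat.ceil_le]
    push_cast
    exact Real.rpow_le_one_of_one_le_of_nonpos (by norm_num)
      (mul_nonpos_of_nonneg_of_nonpos (Nat.cast_nonneg n) hr)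
  omega

lemma neg_SI (PX : 𝒳 → ℝ) (Q : 𝒳 → 𝒜 → 𝒴 → ℝ)
    (ρ : 𝒳 → Xh → ℝ) (Λ : 𝒜 → ℝ) (D C R R' : ℝ) (hR0 : R < 0)
    (hR : AchievableEncSI PX Q ρ Λ R D C) : AchievableEncNoSI PX Q ρ Λ R' D C := by
  intro ε hε
  obtain ⟨N, hN⟩ := hR (min ε (-R)) (lt_min hε (by linarith))
  refine ⟨N, fun n hn => ?_⟩
  obtain ⟨act, enc, dec, hd, hc⟩ := hN n hn
  have hone := ceil_one n (R + min ε (-R)) (by linarith [min_le_right ε (-R)])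
  have hle : min ε (-R) ≤ ε := min_le_left _ _
  have hn0 : (0 : ℝ) ≤ n := Nat.cast_nonneg n
  let m0 : Fin ⌈(2 : ℝ) ^ ((n : ℝ) * (R + min ε (-R)))⌉₊ := ⟨0, by rw [hone]; norm_num⟩
  have hsub : ∀ m : Fin ⌈(2 : ℝ) ^ ((n : ℝ) * (R + min ε (-R)))⌉₊, m = m0 := by
    intro m
    have := m.2
    ext
    change m.1 = 0
    omega
  refine ⟨act, fun _ => ⟨0, Nat.ceil_pos.2 (by positivity)⟩, fun _ ys => dec m0 ys, ?_, ?_⟩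
  · refine le_trans (le_of_eq ?_) (hd.trans (by gcongr))
    unfold encActDist
    refine Finset.sum_congr rfl fun w _ => ?_
    rw [hsub (enc w.1 w.2)]
  · exact hc.trans (by gcongr)

lemma noSI_SI (PX : 𝒳 → ℝ) (Q : 𝒳 → 𝒜 → 𝒴 → ℝ)
    (ρ : 𝒳 → Xh → ℝ) (Λ : 𝒜 → ℝ) (D C R : ℝ)
    (hR : AchievableEncNoSI PX Q ρ Λ R D C) : AchievableEncSI PX Q ρ Λ R D C := by
  intro ε hε
  obtain ⟨N, hN⟩ := hR ε hε
  refine ⟨N, fun n hn => ?_⟩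
  obtain ⟨act, enc, dec, hd, hc⟩ := hN n hn
  exact ⟨act, fun xs _ => enc xs, dec, hd, hc⟩

lemma sInf_compare (A L : Set ℝ) (ha : ∀ R ∈ A, sInf L ≤ max R 0)
    (hb : ∀ R ∈ A, R < 0 → ∀ R', R' ∈ A) (hc : L.Nonempty → A.Nonempty) : sInf L ≤ sInf A := by
  by_cases hneg : ∃ R ∈ A, R < 0
  · obtain ⟨R, hR, hR0⟩ := hneg
    have h1 : sInf A = 0 := by
      refine Real.sInf_of_not_bddBelow ?_
      rintro ⟨b, hb'⟩
      have := hb' (hb R hR hR0 (b - 1))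
      linarith
    rw [h1]
    simpa [hR0.le] using ha R hR
  · push Not at hneg
    rcases L.eq_empty_or_nonempty with h | h
    · rw [h, Real.sInf_empty]
      exact Real.sInf_nonneg hneg
    · refine le_csInf (hc h) fun R hR => ?_
      simpa [hneg R hR] using ha R hR

end final


/-- For the side-information vending machine at the encoder (with or without
side information at the encoder), the rate-distortion-cost function is bounded below by
`min [ I(X;X̂) − I(Y;(X,A)) ]`, minimized over joint laws of the form
`P_X·P_{A|X}·P_{Y|X,A}·P_{X̂|X,A,Y}` satisfying `E[ρ(X,X̂)] ≤ D` and `E[Λ(A)] ≤ C`. -/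
theorem lower_bound_encoder_actions
    [Fintype 𝒳] [DecidableEq 𝒳] [Fintype 𝒜] [DecidableEq 𝒜]
    [Fintype 𝒴] [DecidableEq 𝒴] [Fintype Xh] [DecidableEq Xh]
    (PX : 𝒳 → ℝ) (hPX : IsPMF PX)
    (Q : 𝒳 → 𝒜 → 𝒴 → ℝ) (hQ0 : ∀ x a y, 0 ≤ Q x a y) (hQ1 : ∀ x a, ∑ y, Q x a y = 1)
    (ρ : 𝒳 → Xh → ℝ) (hρ : ∀ x xh, 0 ≤ ρ x xh)
    (Λ : 𝒜 → ℝ) (hΛ : ∀ a, 0 ≤ Λ a)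
    (D C : ℝ) (hD : 0 ≤ D) (hC : 0 ≤ C) :
    sInf {R : ℝ | AchievableEncNoSI PX Q ρ Λ R D C} ≥ sInf (lbSetEnc PX Q ρ Λ D C) ∧
      sInf {R : ℝ | AchievableEncSI PX Q ρ Λ R D C} ≥ sInf (lbSetEnc PX Q ρ Λ D C) := by
  constructor
  · refine sInf_compare _ _ (fun R hR => ?_) (fun R hR h0 R' => ?_) (fun h => ?_)
    · exact claimK PX hPX Q hQ0 hQ1 ρ Λ D C R (noSI_SI PX Q ρ Λ D C R hR)
    · exact neg_SI PX Q ρ Λ D C R R' h0 (noSI_SI PX Q ρ Λ D C R hR)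
    · exact ach_nonempty PX hPX Q hQ0 hQ1 ρ Λ D C h
  · refine sInf_compare _ _ (fun R hR => ?_) (fun R hR h0 R' => ?_) (fun h => ?_)
    · exact claimK PX hPX Q hQ0 hQ1 ρ Λ D C R hR
    · exact noSI_SI PX Q ρ Λ D C R' (neg_SI PX Q ρ Λ D C R R' h0 hR)
    · obtain ⟨R, hR⟩ := ach_nonempty PX hPX Q hQ0 hQ1 ρ Λ D C h
      exact ⟨R, noSI_SI PX Q ρ Λ D C R hR⟩
end
end

section
/- In the definition of R^(I)(D,C) = min over finite auxiliary alphabets 𝒰 and kernels P_{A,U|X} (subject to the distortion and cost constraints) of I(X;A)+I(X;U|Y,A), it suffices to restrict the auxiliary alphabet to |𝒰| ≤ |𝒳|·|𝒜|+2: the infimum over all finite 𝒰 equals the infimum restricted to 𝒰 with at most |𝒳|·|𝒜|+2 elements. -/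
open scoped BigOperators

noncomputable section

variable {𝒳 𝒜 𝒴 Xh : Type}

/-- Joint pmf on `(Xⁿ, Yⁿ)` induced by a blocklength-`n` scheme in which the decoder,
upon receiving the message `enc xⁿ`, chooses the action sequence `act (enc xⁿ)`, and the
side information `Yⁿ` is produced by the memoryless channel `Q = P_{Y|X,A}`. -/
def decSchemeJoint [Fintype 𝒳] (PX : 𝒳 → ℝ) (Q : 𝒳 → 𝒜 → 𝒴 → ℝ) {n M : ℕ}
    (enc : (Fin n → 𝒳) → Fin M) (act : Fin M → Fin n → 𝒜) :
    (Fin n → 𝒳) × (Fin n → 𝒴) → ℝ :=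
  fun w => (∏ i, PX (w.1 i)) * ∏ i, Q (w.1 i) (act (enc w.1) i) (w.2 i)

/-- Expected total distortion `E[∑ᵢ ρ(Xᵢ, X̂ᵢ)]` of a scheme, where `X̂ⁿ = dec (enc Xⁿ) Yⁿ`. -/
def decSchemeDist [Fintype 𝒳] [Fintype 𝒴] (PX : 𝒳 → ℝ) (Q : 𝒳 → 𝒜 → 𝒴 → ℝ)
    (ρ : 𝒳 → Xh → ℝ) {n M : ℕ}
    (enc : (Fin n → 𝒳) → Fin M) (act : Fin M → Fin n → 𝒜)
    (dec : Fin M → (Fin n → 𝒴) → Fin n → Xh) : ℝ :=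
  ∑ w : (Fin n → 𝒳) × (Fin n → 𝒴),
    decSchemeJoint PX Q enc act w * ∑ i, ρ (w.1 i) (dec (enc w.1) w.2 i)

/-- Expected total action cost `E[∑ᵢ Λ(Aᵢ)]` of a scheme. -/
def decSchemeCost [Fintype 𝒳] (PX : 𝒳 → ℝ) (Λ : 𝒜 → ℝ) {n M : ℕ}
    (enc : (Fin n → 𝒳) → Fin M) (act : Fin M → Fin n → 𝒜) : ℝ :=
  ∑ xs : Fin n → 𝒳, (∏ i, PX (xs i)) * ∑ i, Λ (act (enc xs) i)

/-- The single-letter joint law `P_X(x)·k(a,u|x)·Q(y|x,a)` on `𝒳 × 𝒜 × U × 𝒴`. -/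
def slJoint (PX : 𝒳 → ℝ) (Q : 𝒳 → 𝒜 → 𝒴 → ℝ) (U : Type) (k : 𝒳 → 𝒜 → U → ℝ) :
    𝒳 × 𝒜 × U × 𝒴 → ℝ :=
  fun z => PX z.1 * k z.1 z.2.1 z.2.2.1 * Q z.1 z.2.1 z.2.2.2

/-- `(R, D, C)` is achievable for the decoder-actions setting: for every `ε > 0` and all
sufficiently large `n`, there is a blocklength-`n` scheme with message set
`{1, …, ⌈2^{n(R+ε)}⌉}` whose expected distortion is at most `n(D+ε)` and whose expected
action cost is at most `n(C+ε)`. -/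
def AchievableDec [Fintype 𝒳] [Fintype 𝒴] (PX : 𝒳 → ℝ) (Q : 𝒳 → 𝒜 → 𝒴 → ℝ)
    (ρ : 𝒳 → Xh → ℝ) (Λ : 𝒜 → ℝ) (R D C : ℝ) : Prop :=
  ∀ ε > (0 : ℝ), ∃ N : ℕ, ∀ n ≥ N,
    ∃ (enc : (Fin n → 𝒳) → Fin ⌈(2 : ℝ) ^ ((n : ℝ) * (R + ε))⌉₊)
      (act : Fin ⌈(2 : ℝ) ^ ((n : ℝ) * (R + ε))⌉₊ → Fin n → 𝒜)
      (dec : Fin ⌈(2 : ℝ) ^ ((n : ℝ) * (R + ε))⌉₊ → (Fin n → 𝒴) → Fin n → Xh),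
      decSchemeDist PX Q ρ enc act dec ≤ n * (D + ε) ∧
      decSchemeCost PX Λ enc act ≤ n * (C + ε)

/-- `(U, k)` with auxiliary alphabet `U` (with instances `iU`, `dU`) and kernel
`k = P_{A,U|X}` witnesses the value `r` in the single-letter expression: `k` is a valid
kernel, the induced joint law `P_X·k·Q` admits a reconstruction map meeting the distortion
constraint `D`, meets the cost constraint `C`, and `r = I(X;A) + I(X;U|Y,A)`. -/
def SLWitnessDec [Fintype 𝒳] [DecidableEq 𝒳] [Fintype 𝒜] [DecidableEq 𝒜]
    [Fintype 𝒴] [DecidableEq 𝒴]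
    (PX : 𝒳 → ℝ) (Q : 𝒳 → 𝒜 → 𝒴 → ℝ) (ρ : 𝒳 → Xh → ℝ) (Λ : 𝒜 → ℝ)
    (D C r : ℝ) (U : Type) (iU : Fintype U) (dU : DecidableEq U)
    (k : 𝒳 → 𝒜 → U → ℝ) : Prop :=
  letI := iU
  letI := dU
  (∀ x a u, 0 ≤ k x a u) ∧ (∀ x, ∑ a, ∑ u, k x a u = 1) ∧
  (∃ xhat : U → 𝒴 → Xh,
      ∑ z : 𝒳 × 𝒜 × U × 𝒴, slJoint PX Q U k z * ρ z.1 (xhat z.2.2.1 z.2.2.2) ≤ D) ∧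
  (∑ z : 𝒳 × 𝒜 × U × 𝒴, slJoint PX Q U k z * Λ z.2.1 ≤ C) ∧
  r = mutInf (slJoint PX Q U k) (fun z => z.1) (fun z => z.2.1) +
      condMutInf (slJoint PX Q U k) (fun z => z.1) (fun z => z.2.2.1)
        (fun z => (z.2.2.2, z.2.1))

/-- Conic Caratheodory: a finite sum of vectors can be re-weighted with nonnegative weights
supported on at most `finrank` indices. -/
theorem conic_reduce {U V : Type} [Fintype U] [AddCommGroup V] [Module ℝ V]
    [FiniteDimensional ℝ V] (v : U → V) :
    ∃ w : U → ℝ, (∀ u, 0 ≤ w u) ∧ ∑ u, w u • v u = ∑ u, v u ∧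
      (Finset.univ.filter (fun u => w u ≠ 0)).card ≤ Module.finrank ℝ V := by
  classical
  let P : ℕ → Prop := fun n => ∃ w : U → ℝ, (∀ u, 0 ≤ w u) ∧ ∑ u, w u • v u = ∑ u, v u ∧
      (Finset.univ.filter (fun u => w u ≠ 0)).card = n
  have hex : ∃ n, P n := ⟨_, fun _ => 1, fun _ => zero_le_one, by simp, rfl⟩
  obtain ⟨w, hw0, hw1, hw2⟩ := Nat.find_spec hex
  refine ⟨w, hw0, hw1, ?_⟩
  by_contra hlt
  push Not at hlt
  set S := Finset.univ.filter (fun u => w u ≠ 0) with hS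
  have hdep : ¬ LinearIndependent ℝ (fun u : S => v u) := by
    intro h
    have := h.fintype_card_le_finrank
    rw [Fintype.card_coe] at this
    omega
  rw [Fintype.not_linearIndependent_iff] at hdep
  obtain ⟨g, hg, i0, hi0⟩ := hdep
  -- a dependency with a positive coefficient
  obtain ⟨c, hc0, hcS, i1, hi1⟩ : ∃ c : U → ℝ, ∑ u, c u • v u = 0 ∧ (∀ u, u ∉ S → c u = 0) ∧
      ∃ i, 0 < c i := by
    let c0 : U → ℝ := fun u => if h : u ∈ S then g ⟨u, h⟩ else 0
    have hc0S : ∀ u, u ∉ S → c0 u = 0 := fun u hu => by simp [c0, hu]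
    have hc00 : ∑ u, c0 u • v u = 0 := by
      rw [← hg, ← Finset.sum_subset (Finset.subset_univ S)
        (fun u _ hu => by rw [hc0S u hu, zero_smul]), ← Finset.sum_coe_sort]
      exact Finset.sum_congr rfl (fun u _ => by simp [c0])
    have hci : c0 i0 = g i0 := by simp [c0]
    rcases lt_or_gt_of_ne hi0 with h | h
    · exact ⟨fun u => - c0 u, by simp [hc00], fun u hu => by simp [hc0S u hu], i0,
        by simp only [hci]; linarith⟩
    · exact ⟨c0, hc00, hc0S, i0, by rw [hci]; exact h⟩
  obtain ⟨j, hj, hjmin⟩ := Finset.exists_min_image (Finset.univ.filter (fun u => 0 < c u))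
    (fun u => w u / c u) ⟨i1, by simp [hi1]⟩
  have hcj : 0 < c j := by simpa using hj
  set t := w j / c j with ht
  have ht0 : 0 ≤ t := div_nonneg (hw0 j) hcj.le
  have hjS : j ∈ S := by
    by_contra h
    exact hcj.ne' (hcS j h)
  let w' : U → ℝ := fun u => w u - t * c u
  have hw'j : w' j = 0 := by
    simp only [w', ht]
    field_simp
    ring
  have hlt2 : (Finset.univ.filter (fun u => w' u ≠ 0)).card < S.card := by
    apply Finset.card_lt_card
    rw [Finset.ssubset_iff_of_subset]
    · exact ⟨j, hjS, by simp [hw'j]⟩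
    · intro u hu
      by_contra h
      have h2 : w u = 0 := by simpa [hS] using h
      simp [w', h2, hcS u h] at hu
  rw [hw2] at hlt2
  apply Nat.find_min hex hlt2
  refine ⟨w', ?_, ?_, rfl⟩
  · intro u
    simp only [w']
    rcases le_or_gt (c u) 0 with h | h
    · nlinarith [hw0 u, mul_nonneg ht0 (neg_nonneg.2 h)]
    · have h1 := hjmin u (by simp [h])
      have h2 : t * c u ≤ w u := (le_div_iff₀ h).1 h1
      linarith
  · simp only [w', sub_smul, Finset.sum_sub_distrib, mul_smul, ← Finset.smul_sum, hc0, hw1]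
    simp

/-- `t log₂ t`. -/
def phi (t : ℝ) : ℝ := t * Real.logb 2 t

theorem phi_mul (c t : ℝ) : phi (c * t) = c * phi t + t * phi c := by
  unfold phi
  by_cases hc : c = 0
  · simp [hc]
  by_cases ht : t = 0
  · simp [ht]
  rw [Real.logb_mul hc ht]
  ring

/-- Contribution of one letter `u` to `H(X|U,Y,A)`. -/
def hU [Fintype 𝒳] [Fintype 𝒜] [Fintype 𝒴] (PX : 𝒳 → ℝ) (Q : 𝒳 → 𝒜 → 𝒴 → ℝ)
    (κ : 𝒳 → 𝒜 → ℝ) : ℝ :=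
  ∑ y, ∑ a, (phi (∑ x, PX x * κ x a * Q x a y) - ∑ x, phi (PX x * κ x a * Q x a y))

theorem hU_smul [Fintype 𝒳] [Fintype 𝒜] [Fintype 𝒴] (PX : 𝒳 → ℝ) (Q : 𝒳 → 𝒜 → 𝒴 → ℝ)
    (κ : 𝒳 → 𝒜 → ℝ) (c : ℝ) : hU PX Q (fun x a => c * κ x a) = c * hU PX Q κ := by
  unfold hU
  simp only [Finset.mul_sum]
  refine Finset.sum_congr rfl fun y _ => Finset.sum_congr rfl fun a _ => ?_
  have h : ∀ x, PX x * (c * κ x a) * Q x a y = c * (PX x * κ x a * Q x a y) := fun x => by ring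
  simp only [h, ← Finset.mul_sum, phi_mul, Finset.sum_add_distrib, ← Finset.sum_mul]
  ring

theorem ent_marg [Fintype 𝒳] [Fintype 𝒜] [Fintype 𝒴] {β : Type} [Fintype β] [DecidableEq β]
    (PX : 𝒳 → ℝ) (Q : 𝒳 → 𝒜 → 𝒴 → ℝ) {U : Type} [Fintype U] (k : 𝒳 → 𝒜 → U → ℝ)
    {U' : Type} [Fintype U'] (k' : 𝒳 → 𝒜 → U' → ℝ)
    (h : ∀ x a, ∑ u, k x a u = ∑ u, k' x a u) (g : 𝒳 → 𝒜 → 𝒴 → β) :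
    ent (slJoint PX Q U k) (fun z => g z.1 z.2.1 z.2.2.2) =
      ent (slJoint PX Q U' k') (fun z => g z.1 z.2.1 z.2.2.2) := by
  have key : ∀ (W : Type) [Fintype W] (l : 𝒳 → 𝒜 → W → ℝ) (b : β),
      pmass (slJoint PX Q W l) (fun z => g z.1 z.2.1 z.2.2.2) b =
      ∑ x, ∑ a, ∑ y, if g x a y = b then PX x * (∑ u, l x a u) * Q x a y else 0 := by
    intro W _ l b
    unfold pmass slJoint
    simp only [Fintype.sum_prod_type]
    refine Finset.sum_congr rfl fun x _ => Finset.sum_congr rfl fun a _ => ?_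
    rw [Finset.sum_comm]
    refine Finset.sum_congr rfl fun y _ => ?_
    split_ifs
    · rw [Finset.mul_sum, Finset.sum_mul]
    · simp
  unfold ent
  simp only [key, h]

theorem condEnt_eq [Fintype 𝒳] [DecidableEq 𝒳] [Fintype 𝒜] [DecidableEq 𝒜]
    [Fintype 𝒴] [DecidableEq 𝒴] (PX : 𝒳 → ℝ) (Q : 𝒳 → 𝒜 → 𝒴 → ℝ) {U : Type} [Fintype U]
    [DecidableEq U] (k : 𝒳 → 𝒜 → U → ℝ) :
    condEnt (slJoint PX Q U k) (fun z => z.1) (fun z => (z.2.2.1, (z.2.2.2, z.2.1))) =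
      ∑ u, hU PX Q (fun x a => k x a u) := by
  have h1 : ∀ x u y a, pmass (slJoint PX Q U k)
      (fun z => (z.1, (z.2.2.1, (z.2.2.2, z.2.1)))) (x, (u, (y, a))) =
      PX x * k x a u * Q x a y := by
    intro x u y a
    unfold pmass
    rw [Finset.sum_eq_single (x, a, u, y)]
    · simp [slJoint]
    · rintro ⟨x', a', u', y'⟩ _ hne
      rw [if_neg]
      simp only [ne_eq, Prod.mk.injEq] at hne ⊢
      tauto
    · simp
  have h2 : ∀ u y a, pmass (slJoint PX Q U k)
      (fun z => (z.2.2.1, (z.2.2.2, z.2.1))) (u, (y, a)) =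
      ∑ x, PX x * k x a u * Q x a y := by
    intro u y a
    unfold pmass
    rw [Fintype.sum_prod_type]
    refine Finset.sum_congr rfl fun x _ => ?_
    rw [Finset.sum_eq_single (a, u, y)]
    · simp [slJoint]
    · rintro ⟨a', u', y'⟩ _ hne
      rw [if_neg]
      simp only [ne_eq, Prod.mk.injEq] at hne ⊢
      tauto
    · simp
  unfold condEnt ent
  simp only [Fintype.sum_prod_type, h1, h2]
  simp only [hU, Finset.sum_sub_distrib, phi]
  have : ∀ f : 𝒳 → U → 𝒴 → 𝒜 → ℝ, ∑ x, ∑ u, ∑ y, ∑ a, f x u y a =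
      ∑ u, ∑ y, ∑ a, ∑ x, f x u y a := by
    intro f
    rw [Finset.sum_comm]
    refine Finset.sum_congr rfl fun u _ => ?_
    rw [Finset.sum_comm]
    refine Finset.sum_congr rfl fun y _ => ?_
    rw [Finset.sum_comm]
  rw [this]
  ring

theorem sum_support {U : Type} [Fintype U] (w F : U → ℝ)
    [Fintype {u // w u ≠ 0}] :
    ∑ u : {u // w u ≠ 0}, w u * F u = ∑ u, w u * F u := by
  classical
  rw [← Finset.sum_subset (Finset.subset_univ (Finset.univ.filter (fun u => w u ≠ 0)))]
  · exact (Finset.sum_subtype _ (by simp) (fun u => w u * F u)).symm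
  · intro u _ hu
    have : w u = 0 := by simpa using hu
    simp [this]

theorem witness_reduce [Fintype 𝒳] [DecidableEq 𝒳] [Fintype 𝒜] [DecidableEq 𝒜]
    [Fintype 𝒴] [DecidableEq 𝒴]
    (PX : 𝒳 → ℝ) (Q : 𝒳 → 𝒜 → 𝒴 → ℝ) (ρ : 𝒳 → Xh → ℝ) (Λ : 𝒜 → ℝ) (D C r : ℝ)
    (U : Type) (iU : Fintype U) (dU : DecidableEq U) (k : 𝒳 → 𝒜 → U → ℝ)
    (H : SLWitnessDec PX Q ρ Λ D C r U iU dU k) :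
    ∃ (U : Type) (iU : Fintype U) (dU : DecidableEq U)
        (k : 𝒳 → 𝒜 → U → ℝ),
        @Fintype.card U iU ≤ Fintype.card 𝒳 * Fintype.card 𝒜 + 2 ∧
        SLWitnessDec PX Q ρ Λ D C r U iU dU k := by
  classical
  obtain ⟨hk0, hk1, ⟨xhat, hD⟩, hC, hr⟩ := H
  let d : U → ℝ := fun u => ∑ x, ∑ a, ∑ y, PX x * k x a u * Q x a y * ρ x (xhat u y)
  obtain ⟨w, hw0, hw1, hw2⟩ := conic_reduce (V := (𝒳 × 𝒜 → ℝ) × ℝ × ℝ)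
    (fun u => (fun p => k p.1 p.2 u, d u, hU PX Q (fun x a => k x a u)))
  have e1 : ∀ x a, ∑ u, w u * k x a u = ∑ u, k x a u := by
    intro x a
    have := congrFun (congrArg Prod.fst hw1) (x, a)
    simpa [Prod.fst_sum] using this
  have e2 : ∑ u, w u * d u = ∑ u, d u := by
    have := congrArg (fun z => z.2.1) hw1
    simpa [Prod.fst_sum, Prod.snd_sum] using this
  have e3 : ∑ u, w u * hU PX Q (fun x a => k x a u) = ∑ u, hU PX Q (fun x a => k x a u) := by
    have := congrArg (fun z => z.2.2) hw1
    simpa [Prod.fst_sum, Prod.snd_sum] using this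
  let k' : 𝒳 → 𝒜 → {u // w u ≠ 0} → ℝ := fun x a u => w u * k x a u
  have hm : ∀ x a, ∑ u, k x a u = ∑ u, k' x a u := by
    intro x a
    rw [← e1, ← sum_support w (fun u => k x a u)]
  refine ⟨{u // w u ≠ 0}, inferInstance, inferInstance, k', ?_, ?_, ?_, ⟨fun u => xhat u, ?_⟩,
    ?_, ?_⟩
  · rw [Fintype.card_subtype]
    refine hw2.trans (le_of_eq ?_)
    simp
  · exact fun x a u => mul_nonneg (hw0 _) (hk0 _ _ _)
  · intro x
    simp only [← hm]
    exact hk1 x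
  · refine le_trans (le_of_eq ?_) hD
    have hd : ∀ (W : Type) [Fintype W] (l : 𝒳 → 𝒜 → W → ℝ) (xh : W → 𝒴 → Xh),
        ∑ z : 𝒳 × 𝒜 × W × 𝒴, slJoint PX Q W l z * ρ z.1 (xh z.2.2.1 z.2.2.2) =
        ∑ u, ∑ x, ∑ a, ∑ y, PX x * l x a u * Q x a y * ρ x (xh u y) := by
      intro W _ l xh
      simp only [Fintype.sum_prod_type, slJoint]
      rw [Finset.sum_comm]
      rw [Finset.sum_comm, Finset.sum_comm (s := (Finset.univ : Finset W))]
      refine Finset.sum_congr rfl fun x _ => ?_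
      rw [Finset.sum_comm]
    refine (hd _ k' (fun u => xhat u)).trans (Eq.trans ?_ (hd _ k xhat).symm)
    change _ = ∑ u, d u
    rw [← e2, ← sum_support w d]
    refine Finset.sum_congr rfl fun u _ => ?_
    simp only [d, Finset.mul_sum, k']
    refine Finset.sum_congr rfl fun x _ => Finset.sum_congr rfl fun a _ =>
      Finset.sum_congr rfl fun y _ => ?_
    ring
  · refine le_trans (le_of_eq ?_) hC
    have hd : ∀ (W : Type) [Fintype W] (l : 𝒳 → 𝒜 → W → ℝ),
        ∑ z : 𝒳 × 𝒜 × W × 𝒴, slJoint PX Q W l z * Λ z.2.1 =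
        ∑ x, ∑ a, ∑ y, PX x * (∑ u, l x a u) * Q x a y * Λ a := by
      intro W _ l
      simp only [Fintype.sum_prod_type, slJoint]
      refine Finset.sum_congr rfl fun x _ => Finset.sum_congr rfl fun a _ => ?_
      rw [Finset.sum_comm]
      refine Finset.sum_congr rfl fun y _ => ?_
      rw [Finset.mul_sum, Finset.sum_mul, Finset.sum_mul]
    rw [hd, hd]
    simp only [hm]
  · rw [hr]
    have e4 : ∑ u, hU PX Q (fun x a => k' x a u) = ∑ u, hU PX Q (fun x a => k x a u) := by
      rw [← e3, ← sum_support w]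
      exact Finset.sum_congr rfl fun u _ => hU_smul PX Q _ _
    unfold mutInf condMutInf
    rw [condEnt_eq, condEnt_eq, e4]
    unfold condEnt
    rw [ent_marg PX Q k k' hm (fun x _ _ => x), ent_marg PX Q k k' hm (fun _ a _ => a),
      ent_marg PX Q k k' hm (fun x a _ => (x, a)), ent_marg PX Q k k' hm (fun x a y => (x, (y, a))),
      ent_marg PX Q k k' hm (fun _ a y => (y, a))]

/-- In the single-letter expression
`R^(I)(D,C) = min [ I(X;A) + I(X;U|Y,A) ]` (minimum over finite auxiliary alphabets `U`
and kernels `P_{A,U|X}` subject to the distortion and cost constraints), it suffices to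
restrict the auxiliary alphabet to `|U| ≤ |𝒳|·|𝒜| + 2`: the infimum over all finite `U`
equals the infimum restricted to `U` with at most `|𝒳|·|𝒜| + 2` elements. -/
theorem cardinality_bound_aux_alphabet
    [Fintype 𝒳] [DecidableEq 𝒳] [Fintype 𝒜] [DecidableEq 𝒜]
    [Fintype 𝒴] [DecidableEq 𝒴]
    (PX : 𝒳 → ℝ) (hPX : IsPMF PX)
    (Q : 𝒳 → 𝒜 → 𝒴 → ℝ) (hQ0 : ∀ x a y, 0 ≤ Q x a y) (hQ1 : ∀ x a, ∑ y, Q x a y = 1)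
    (ρ : 𝒳 → Xh → ℝ) (hρ : ∀ x xh, 0 ≤ ρ x xh)
    (Λ : 𝒜 → ℝ) (hΛ : ∀ a, 0 ≤ Λ a)
    (D C : ℝ) (hD : 0 ≤ D) (hC : 0 ≤ C) :
    sInf {r : ℝ | ∃ (U : Type) (iU : Fintype U) (dU : DecidableEq U)
        (k : 𝒳 → 𝒜 → U → ℝ), SLWitnessDec PX Q ρ Λ D C r U iU dU k} =
      sInf {r : ℝ | ∃ (U : Type) (iU : Fintype U) (dU : DecidableEq U)
        (k : 𝒳 → 𝒜 → U → ℝ),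
        @Fintype.card U iU ≤ Fintype.card 𝒳 * Fintype.card 𝒜 + 2 ∧
        SLWitnessDec PX Q ρ Λ D C r U iU dU k} := by
  congr 1
  ext r
  constructor
  · rintro ⟨U, iU, dU, k, H⟩
    exact witness_reduce PX Q ρ Λ D C r U iU dU k H
  · rintro ⟨U, iU, dU, k, _, H⟩
    exact ⟨U, iU, dU, k, H⟩
end
end

section
/- In the definition of R^(I)(D,C) = min over finite auxiliary alphabets 𝒰 and kernels P_{A,U|X} (subject to the distortion and cost constraints) of I(X;A)+I(X;U|Y,A), it suffices to restrict to joint distributions in which A is a deterministic function of U: the infimum over all kernels P_{A,U|X} equals the infimum over joint laws of the form P_X(x)·P_{U|X}(u|x)·1{a=f(u)}·P_{Y|X,A}(y|x,a) for some function f:𝒰→𝒜 (allowing arbitrary finite 𝒰 in both infima). -/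
open scoped BigOperators

noncomputable section

variable {𝒳 𝒜 𝒴 Xh : Type}

theorem ent_comp_inj {Ω α β : Type*} [Fintype Ω] [Fintype α] [DecidableEq α] [Fintype β]
    [DecidableEq β] (q : Ω → ℝ) (f : Ω → α) (i : α → β) (hi : Function.Injective i) :
    ent q (fun ω => i (f ω)) = ent q f := by
  unfold ent
  congr 1
  symm
  have hp : ∀ a, pmass q (fun ω => i (f ω)) (i a) = pmass q f a := by
    intro a
    simp [pmass, hi.eq_iff]
  refine Finset.sum_of_injOn i hi.injOn (by simp) ?_ ?_
  · intro b _ hb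
    have : pmass q (fun ω => i (f ω)) b = 0 := by
      unfold pmass
      refine Finset.sum_eq_zero fun ω _ => ?_
      rw [if_neg]
      rintro rfl
      exact hb (by simp)
    simp [this]
  · intro a _
    rw [hp]

theorem ent_transfer {Ω Ω' α : Type*} [Fintype Ω] [Fintype Ω'] [Fintype α] [DecidableEq α]
    (q : Ω → ℝ) (q' : Ω' → ℝ) (e : Ω → Ω')
    (h : ∀ F : Ω' → ℝ, ∑ z, q' z * F z = ∑ w, q w * F (e w)) (f : Ω' → α) :
    ent q' f = ent q (fun w => f (e w)) := by
  have : ∀ a, pmass q' f a = pmass q (fun w => f (e w)) a := by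
    intro a
    have := h (fun z => if f z = a then 1 else 0)
    simpa [pmass] using this
  simp [ent, this]

theorem slJoint_transfer [Fintype 𝒳] [Fintype 𝒜] [DecidableEq 𝒜] [Fintype 𝒴]
    (PX : 𝒳 → ℝ) (Q : 𝒳 → 𝒜 → 𝒴 → ℝ) (U : Type) [Fintype U] (k : 𝒳 → 𝒜 → U → ℝ)
    (F : 𝒳 × 𝒜 × (𝒜 × U) × 𝒴 → ℝ) :
    ∑ z, slJoint PX Q (𝒜 × U) (fun x a u => if a = u.1 then k x u.1 u.2 else 0) z * F z =
      ∑ w : 𝒳 × 𝒜 × U × 𝒴, slJoint PX Q U k w * F (w.1, w.2.1, (w.2.1, w.2.2.1), w.2.2.2) := by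
  simp only [slJoint, Fintype.sum_prod_type]
  refine Finset.sum_congr rfl fun x _ => Finset.sum_congr rfl fun a _ => ?_
  rw [Finset.sum_eq_single a]
  · simp
  · intro b _ hb
    simp [Ne.symm hb]
  · simp

/-- In the single-letter expression
`R^(I)(D,C) = min [ I(X;A) + I(X;U|Y,A) ]` (minimum over finite auxiliary alphabets `U`
and kernels `P_{A,U|X}` subject to the distortion and cost constraints), it suffices to
restrict to joint laws in which `A` is a deterministic function of `U`, i.e. of the form
`P_X(x)·P_{U|X}(u|x)·1{a = f(u)}·P_{Y|X,A}(y|x,a)` for some `f : U → 𝒜`. -/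
theorem deterministic_action_of_aux_suffices
    [Fintype 𝒳] [DecidableEq 𝒳] [Fintype 𝒜] [DecidableEq 𝒜]
    [Fintype 𝒴] [DecidableEq 𝒴]
    (PX : 𝒳 → ℝ) (hPX : IsPMF PX)
    (Q : 𝒳 → 𝒜 → 𝒴 → ℝ) (hQ0 : ∀ x a y, 0 ≤ Q x a y) (hQ1 : ∀ x a, ∑ y, Q x a y = 1)
    (ρ : 𝒳 → Xh → ℝ) (hρ : ∀ x xh, 0 ≤ ρ x xh)
    (Λ : 𝒜 → ℝ) (hΛ : ∀ a, 0 ≤ Λ a)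
    (D C : ℝ) (hD : 0 ≤ D) (hC : 0 ≤ C) :
    sInf {r : ℝ | ∃ (U : Type) (iU : Fintype U) (dU : DecidableEq U)
        (k : 𝒳 → 𝒜 → U → ℝ), SLWitnessDec PX Q ρ Λ D C r U iU dU k} =
      sInf {r : ℝ | ∃ (U : Type) (iU : Fintype U) (dU : DecidableEq U)
        (kU : 𝒳 → U → ℝ) (f : U → 𝒜),
        (letI := iU
         letI := dU
         (∀ x u, 0 ≤ kU x u) ∧ (∀ x, ∑ u, kU x u = 1)) ∧
        SLWitnessDec PX Q ρ Λ D C r U iU dU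
          (fun x a u => if a = f u then kU x u else 0)} := by
  congr 1
  ext r
  constructor
  · rintro ⟨U, iU, dU, k, h0, h1, ⟨xhat, hx⟩, hc, hr⟩
    refine ⟨𝒜 × U, inferInstance, inferInstance, fun x u => k x u.1 u.2, Prod.fst,
      ⟨fun x u => h0 _ _ _, fun x => ?_⟩, ?_, ?_, ⟨fun u y => xhat u.2 y, ?_⟩, ?_, ?_⟩
    · rw [Fintype.sum_prod_type]
      exact h1 x
    · intro x a u
      dsimp only
      split_ifs
      · exact h0 _ _ _
      · exact le_rfl
    · intro x
      rw [Finset.sum_comm]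
      simpa [Fintype.sum_prod_type] using h1 x
    · exact (slJoint_transfer PX Q U k
        (fun z => ρ z.1 (xhat z.2.2.1.2 z.2.2.2))).trans_le hx
    · exact (slJoint_transfer PX Q U k (fun z => Λ z.2.1)).trans_le hc
    · rw [hr]
      have T := slJoint_transfer PX Q U k
      simp only [mutInf, condMutInf, condEnt]
      simp only [ent_transfer _ _ _ T]
      have e1 := ent_comp_inj (slJoint PX Q U k) (fun w => (w.2.2.1, w.2.2.2, w.2.1))
        (fun t : U × 𝒴 × 𝒜 => ((t.2.2, t.1), t.2.1, t.2.2))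
        (by rintro ⟨_, _, _⟩ ⟨_, _, _⟩ h; simp at h ⊢; tauto)
      have e2 := ent_comp_inj (slJoint PX Q U k) (fun w => (w.1, w.2.2.1, w.2.2.2, w.2.1))
        (fun t : 𝒳 × U × 𝒴 × 𝒜 => (t.1, (t.2.2.2, t.2.1), t.2.2.1, t.2.2.2))
        (by rintro ⟨_, _, _, _⟩ ⟨_, _, _, _⟩ h; simp at h ⊢; tauto)
      simp only at e1 e2
      rw [e1, e2]
  · rintro ⟨U, iU, dU, kU, f, _, h⟩
    exact ⟨U, iU, dU, _, h⟩
end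
end

section
/- Let X be uniform on {0,1}, let A be binary with P(A=0|X=1)=P(A=1|X=0)=α for some α∈[0,1] (so P(A=X)=1−α), and given (X,A) let Y be generated as follows: if A=0, Y is the output of the Z-channel with parameter δ (P(Y=0|X=0)=1, P(Y=0|X=1)=δ, P(Y=1|X=1)=1−δ); if A=1, Y is the output of the S-channel with parameter δ (P(Y=1|X=1)=1, P(Y=1|X=0)=δ, P(Y=0|X=0)=1−δ), where δ∈[0,1]. Then I(X;A) + H(X|(Y,A)) = 1 − h(α) + h( αδ/(1−α+αδ) )·(1−α+αδ), where h is the binary entropy function (with the convention that the second term is 0 when 1−α+αδ=0). -/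
open scoped BigOperators

noncomputable section

/-- The binary entropy function (in bits), with the convention `0·log₂0 = 0`. -/
def binEnt (t : ℝ) : ℝ := -(t * Real.logb 2 t) - (1 - t) * Real.logb 2 (1 - t)

/-- Marginalization: the mass of a function of `g` is a sum of masses of `g`. -/
theorem pmass_comp {Ω β γ : Type*} [Fintype Ω] [Fintype β] [DecidableEq β] [DecidableEq γ]
    (q : Ω → ℝ) (g : Ω → β) (k : β → γ) (c : γ) :
    pmass q (fun ω => k (g ω)) c = ∑ b, if k b = c then pmass q g b else 0 := by
  unfold pmass
  have h : ∀ b, (if k b = c then ∑ ω, (if g ω = b then q ω else 0) else 0)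
      = ∑ ω, if g ω = b then (if k b = c then q ω else 0) else 0 := by
    intro b
    by_cases hb : k b = c <;> simp [hb]
  simp only [h]
  rw [Finset.sum_comm]
  simp

theorem phi_half (x : ℝ) :
    (1 / 2 * x) * Real.logb 2 (1 / 2 * x) = (x * Real.logb 2 x - x) / 2 := by
  by_cases hx : x = 0
  · simp [hx]
  · rw [Real.logb_mul (by norm_num) hx, one_div, Real.logb_inv, Real.logb_self_eq_one (by norm_num)]
    ring

theorem binEnt_div_mul (u v : ℝ) (hu : 0 ≤ u) (hv : 0 ≤ v) :
    binEnt (u / (v + u)) * (v + u) =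
      (v + u) * Real.logb 2 (v + u) - u * Real.logb 2 u - v * Real.logb 2 v := by
  by_cases hs : v + u = 0
  · have h1 : u = 0 := by linarith
    have h2 : v = 0 := by linarith
    simp [h1, h2]
  · have h1 : 1 - u / (v + u) = v / (v + u) := by field_simp; ring
    have key : ∀ x : ℝ, x / (v + u) * Real.logb 2 (x / (v + u)) * (v + u)
        = x * Real.logb 2 x - x * Real.logb 2 (v + u) := by
      intro x
      by_cases hx : x = 0
      · simp [hx]
      · rw [Real.logb_div hx hs]
        field_simp
    unfold binEnt
    rw [h1, sub_mul, neg_mul, key, key]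
    ring

/-- `X` uniform on `{0,1}` (encoded as `Bool`, `false = 0`, `true = 1`),
`A` binary with `P(A=0|X=1) = P(A=1|X=0) = α` (so `P(A = X) = 1−α`), and given `(X,A)`:
if `A=0`, `Y` is the Z-channel output (`P(Y=0|X=0)=1`, `P(Y=0|X=1)=δ`, `P(Y=1|X=1)=1−δ`);
if `A=1`, `Y` is the S-channel output (`P(Y=1|X=1)=1`, `P(Y=1|X=0)=δ`, `P(Y=0|X=0)=1−δ`).
Then `I(X;A) + H(X|(Y,A)) = 1 − h(α) + h(αδ/(1−α+αδ))·(1−α+αδ)` (with the second term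
equal to `0` when `1−α+αδ = 0`, which is automatic since division by zero yields `0`). -/
theorem zschannel_rate_identity {Ω : Type*} [Fintype Ω] (p : Ω → ℝ) (hp : IsPMF p)
    (α δ : ℝ) (hα0 : 0 ≤ α) (hα1 : α ≤ 1) (hδ0 : 0 ≤ δ) (hδ1 : δ ≤ 1)
    (X A Y : Ω → Bool)
    (hjoint : ∀ x a y : Bool, pmass p (fun ω => (X ω, A ω, Y ω)) (x, a, y) =
      (1 / 2) * (if a = x then 1 - α else α) *
        (if a = false then
            (if x = false then (if y = false then 1 else 0)
             else (if y = false then δ else 1 - δ))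
          else
            (if x = true then (if y = true then 1 else 0)
             else (if y = true then δ else 1 - δ)))) :
    mutInf p X A + condEnt p X (fun ω => (Y ω, A ω)) =
      1 - binEnt α + binEnt (α * δ / (1 - α + α * δ)) * (1 - α + α * δ) := by
  have hX := pmass_comp p (fun ω => (X ω, A ω, Y ω)) (fun t => t.1)
  have hA := pmass_comp p (fun ω => (X ω, A ω, Y ω)) (fun t => t.2.1)
  have hXA := pmass_comp p (fun ω => (X ω, A ω, Y ω)) (fun t => (t.1, t.2.1))
  have hYA := pmass_comp p (fun ω => (X ω, A ω, Y ω)) (fun t => (t.2.2, t.2.1))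
  have hXYA := pmass_comp p (fun ω => (X ω, A ω, Y ω)) (fun t => (t.1, t.2.2, t.2.1))
  simp only [hjoint, Fintype.sum_prod_type, Fintype.sum_bool] at hX hA hXA hYA hXYA
  have eX : ent p X = 1 := by
    have e : ∀ b, pmass p X b = 1 / 2 * 1 := by
      intro b
      refine (hX b).trans ?_
      cases b <;> simp <;> ring
    simp only [ent, e, phi_half, Fintype.sum_bool]
    norm_num
  have eA : ent p A = 1 := by
    have e : ∀ b, pmass p A b = 1 / 2 * 1 := by
      intro b
      refine (hA b).trans ?_
      cases b <;> simp <;> ring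
    simp only [ent, e, phi_half, Fintype.sum_bool]
    norm_num
  have eXA : ent p (fun ω => (X ω, A ω)) = 1 + binEnt α := by
    have e : ∀ x a, pmass p (fun ω => (X ω, A ω)) (x, a)
        = 1 / 2 * (if a = x then 1 - α else α) := by
      intro x a
      refine (hXA (x, a)).trans ?_
      cases x <;> cases a <;> simp <;> ring
    simp only [ent, Fintype.sum_prod_type, e, phi_half, Fintype.sum_bool, binEnt]
    simp
    ring
  have eYA : ent p (fun ω => (Y ω, A ω)) =
      1 - (1 - α + α * δ) * Real.logb 2 (1 - α + α * δ)
        - (α * (1 - δ)) * Real.logb 2 (α * (1 - δ)) := by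
    have e : ∀ y a, pmass p (fun ω => (Y ω, A ω)) (y, a)
        = 1 / 2 * (if y = a then 1 - α + α * δ else α * (1 - δ)) := by
      intro y a
      refine (hYA (y, a)).trans ?_
      cases y <;> cases a <;> simp <;> ring
    simp only [ent, Fintype.sum_prod_type, e, phi_half, Fintype.sum_bool]
    simp
    ring
  have eXYA : ent p (fun ω => (X ω, Y ω, A ω)) =
      1 - (1 - α) * Real.logb 2 (1 - α) - (α * δ) * Real.logb 2 (α * δ)
        - (α * (1 - δ)) * Real.logb 2 (α * (1 - δ)) := by
    have e : ∀ x y a, pmass p (fun ω => (X ω, Y ω, A ω)) (x, y, a)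
        = 1 / 2 * (if a = x then (if y = a then 1 - α else 0)
            else (if y = a then α * δ else α * (1 - δ))) := by
      intro x y a
      refine (hXYA (x, y, a)).trans ?_
      cases x <;> cases y <;> cases a <;> simp <;> ring
    simp only [ent, Fintype.sum_prod_type, e, phi_half, Fintype.sum_bool]
    simp
    ring
  rw [binEnt_div_mul (α * δ) (1 - α) (mul_nonneg hα0 hδ0) (by linarith)]
  simp only [mutInf, condEnt]
  rw [eX, eA, eXA, eYA, eXYA]
  ring
end
end
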